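/- The mapping torus M(Φ) of an injective endomorphism Φ of a (possibly infinite rank) free group is coherent: every finitely generated subgroup of M(Φ) is finitely presented. -/

import Mathlib

/-- The relators `t eᵢ t⁻¹ Φ(eᵢ)⁻¹` of the mapping torus of an endomorphism `Φ` of the
free group on `I`; the generator `none` plays the role of the stable letter `t`. -/
def mtRels {I : Type} (Φ : FreeGroup I →* FreeGroup I) : Set (FreeGroup (Option I)) :=
  Set.range fun i : I =>
    FreeGroup.of (none : Option I) * FreeGroup.of (some i) * (FreeGroup.of (none : Option I))⁻¹ *
      (FreeGroup.map some (Φ (FreeGroup.of i)))⁻¹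

/-- The mapping torus `M(Φ) = ⟨t, eᵢ (i ∈ I) | t eᵢ t⁻¹ Φ(eᵢ)⁻¹ (i ∈ I)⟩`. -/
abbrev MT {I : Type} (Φ : FreeGroup I →* FreeGroup I) : Type := PresentedGroup (mtRels Φ)

/-- The stable letter `t` of the mapping torus. -/
def mtT {I : Type} (Φ : FreeGroup I →* FreeGroup I) : MT Φ := PresentedGroup.of none

/-- The natural homomorphism `ι : 𝔽 → M(Φ)`. -/
def mtι {I : Type} (Φ : FreeGroup I →* FreeGroup I) : FreeGroup I →* MT Φ :=
  (PresentedGroup.mk (mtRels Φ)).comp (FreeGroup.map some)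

/-- A group is finitely presented if it is isomorphic to the quotient of a finitely
generated free group by the normal closure of a finite set of relators. -/
def FinitelyPresented (G : Type) [Group G] : Prop :=
  ∃ (n : ℕ) (rels : Set (FreeGroup (Fin n))),
    rels.Finite ∧ Nonempty (PresentedGroup rels ≃* G)

/-!
The argument is that of Feighn and Handel. Counting the exponent sum of `t` and conjugating by a
power of `t`, one may assume that a finitely generated subgroup of `M(Φ)` is generated by a single
`s = y tᵈ` with `y ∈ 𝔽`, `d ≥ 0`, and by a finitely generated subgroup `Z` of `𝔽`. If `d = 0`, this
group is free of finite rank. Otherwise conjugation by `s` induces an injective endomorphism `Ψ` of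
`𝔽`, and only the smallest `Ψ`-invariant subgroup `A` containing `Z` matters.

Among the pairs `X`, `Z` of finitely generated subgroups of `𝔽` with `Ψ X ≤ Z` for which `Z`
generates `A` in this sense, choose one where the number `n` of elements needed to generate `Z`
over `X` is least. Then `Z` is the free product of `X` and a free group of rank `n`. Indeed, `X`
preserves a subtree `T` of the Cayley tree of `𝔽` with finitely many orbits of vertices, and if
freeness fails, then some translate `c T` with `c ∈ Z \ X` meets `T`; passing to `X ⊔ ⟨c⟩`,
`Z ⊔ ⟨Ψ c⟩` preserves minimality and lowers the number of orbits, so that induction applies. If `x`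
is a basis of `X` and `b` consists of `n` further generators of `Z`, iterating shows that the `xᵢ`
and all `Ψᵏ bⱼ` form a basis of `A`. Hence the subgroup is presented by the generators `s`, `xᵢ`,
`bⱼ` and the finitely many relations `s xᵢ s⁻¹ = wᵢ` that express `Ψ xᵢ ∈ Z`.
-/

namespace FeighnHandel

open Relation
open FreeGroup (lift mk of startsWith)

section Words

open FreeGroup

variable {I : Type*}

lemma mk_singleton_inv (l : I × Bool) : (mk [l])⁻¹ = mk [(l.1, !l.2)] := by
  simp [invRev]

variable [DecidableEq I]

lemma toWord_mul_letter (h : FreeGroup I) (k : I × Bool) :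
    (h * mk [k]).toWord = h.toWord ++ [k] ∨
      h.toWord = (h * mk [k]).toWord ++ [(k.1, !k.2)] := by
  have hred : IsReduced h.toWord := isReduced_toWord
  have hmk : h = mk h.toWord := mk_toWord.symm
  rcases h.toWord.eq_nil_or_concat' with hw | ⟨w, m, hw⟩ <;> rw [hw] at hred hmk ⊢
  · simp [hmk]
  by_cases hm : m = (k.1, !k.2)
  · have hcancel : h * mk [k] = mk w := by
      rw [hmk, hm, ← mul_mk, ← mk_singleton_inv, inv_mul_cancel_right]
    right
    rw [hcancel, toWord_mk, IsReduced.reduce_eq (List.IsChain.left_of_append hred), hm]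
  · have hred' : IsReduced ([m] ++ [k]) := by
      rw [List.singleton_append, isReduced_cons_cons]
      refine ⟨fun hfst => ?_, .singleton⟩
      by_contra hsnd
      exact hm (Prod.ext hfst (Bool.eq_not_of_ne hsnd))
    left
    rw [hmk, mul_mk, toWord_mk, (hred.append_overlap hred' (by simp)).reduce_eq]

lemma mem_startsWith_of_mul_letter {h : FreeGroup I} {k l : I × Bool} (hne : h ≠ 1)
    (hl : h * mk [k] ∈ startsWith l) : h ∈ startsWith l := by
  have hpos : 0 < h.toWord.length :=
    List.length_pos_iff.2 fun hnil => hne (toWord_eq_nil_iff.1 hnil)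
  simp only [startsWith, Set.mem_ofPred_eq] at hl ⊢
  rcases toWord_mul_letter h k with hw | hw
  · rwa [hw, List.getElem?_append_left hpos] at hl
  · rw [hw, List.getElem?_append_left (List.getElem?_eq_some_iff.1 hl).1, hl]

lemma mk_singleton_mem_startsWith {k l : I × Bool} : mk [k] ∈ startsWith l ↔ k = l := by
  simp [startsWith]

lemma mk_mul_mem_startsWith_iff {l : I × Bool} {h : FreeGroup I} :
    mk [l] * h ∈ startsWith l ↔ h ∉ startsWith (l.1, !l.2) := by
  refine ⟨fun hmul hh => ?_, startsWith_mk_mul h⟩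
  obtain ⟨w, hw⟩ : ∃ w, h.toWord = (l.1, !l.2) :: w := by
    rcases hw : h.toWord with _ | ⟨m, w⟩ <;> simp_all [startsWith]
  have hred : IsReduced ((l.1, !l.2) :: w) := hw ▸ isReduced_toWord
  have hcancel : mk [l] * h = mk w := by
    rw [← mk_toWord (x := h), hw, ← List.singleton_append (l := w), ← mul_mk, ← mk_singleton_inv,
      mul_inv_cancel_left]
  rw [hcancel, startsWith, Set.mem_ofPred_eq, toWord_mk,
    IsReduced.reduce_eq (L := w) (List.IsChain.tail hred)] at hmul
  rcases w with _ | ⟨m, w⟩ <;> simp_all [isReduced_cons_cons]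

end Words

section Paths

open FreeGroup

variable {I : Type*}

/-- Adjacency in the Cayley graph of the free group, restricted to the vertex set `T`. -/
def AdjIn (T : Set (FreeGroup I)) (y z : FreeGroup I) : Prop :=
  y ∈ T ∧ z ∈ T ∧ ∃ l, z = y * mk [l]

/-- Two group elements are joined by a path in the Cayley graph all of whose vertices lie in `T`. -/
abbrev PathIn (T : Set (FreeGroup I)) : FreeGroup I → FreeGroup I → Prop :=
  ReflTransGen (AdjIn T)

variable {T T' : Set (FreeGroup I)} {y z : FreeGroup I}

instance : Std.Symm (AdjIn T) where
  symm := by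
    rintro y _ ⟨hy, hz, l, rfl⟩
    exact ⟨hz, hy, (l.1, !l.2), by rw [← mk_singleton_inv, mul_inv_cancel_right]⟩

lemma PathIn.symm (h : PathIn T y z) : PathIn T z y :=
  ReflTransGen.stdSymm.symm _ _ h

lemma PathIn.mul_left (g : FreeGroup I) (hg : ∀ y ∈ T, g * y ∈ T') (h : PathIn T y z) :
    PathIn T' (g * y) (g * z) := by
  refine ReflTransGen.lift (g * ·) ?_ _ _ h
  rintro y _ ⟨hy, hz, l, rfl⟩
  exact ⟨hg _ hy, hg _ hz, l, (mul_assoc ..).symm⟩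

lemma PathIn.mono (hT : T ⊆ T') (h : PathIn T y z) : PathIn T' y z := by
  simpa using h.mul_left 1 (by simpa using fun y hy => hT hy)

variable [DecidableEq I]

/-- The half-tree of the Cayley tree that lies beyond the edge from `y` to `y * mk [l]`. -/
def branch (y : FreeGroup I) (l : I × Bool) : Set (FreeGroup I) :=
  {g | y⁻¹ * g ∈ startsWith l}

lemma self_notMem_branch (y : FreeGroup I) (l : I × Bool) : y ∉ branch y l := by
  simp [branch, startsWith]

lemma mul_mem_branch_mul {x y g : FreeGroup I} {l : I × Bool} :
    x * g ∈ branch (x * y) l ↔ g ∈ branch y l := by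
  simp [branch, mul_assoc]

/-- The only edge that leads into a half-tree is the one it lies beyond. -/
lemma eq_of_mul_letter_mem_branch {y g : FreeGroup I} {k l : I × Bool} (hg : g ∉ branch y l)
    (hgk : g * mk [k] ∈ branch y l) : g = y ∧ k = l := by
  rw [branch, Set.mem_ofPred_eq, ← mul_assoc] at hgk
  have hy : y⁻¹ * g = 1 := by_contra fun hne => hg (mem_startsWith_of_mul_letter hne hgk)
  rw [hy, one_mul, mk_singleton_mem_startsWith] at hgk
  exact ⟨(inv_mul_eq_one.1 hy).symm, hgk⟩

lemma PathIn.edge_mem {a g : FreeGroup I} {l : I × Bool} (h : PathIn T a g)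
    (ha : a ∉ branch y l) (hg : g ∈ branch y l) : y ∈ T ∧ y * mk [l] ∈ T := by
  induction h with
  | refl => exact absurd hg ha
  | @tail u _ _ hadj ih =>
    by_cases hu : u ∈ branch y l
    · exact ih hu
    · obtain ⟨hu', hz, k, rfl⟩ := hadj
      obtain ⟨rfl, rfl⟩ := eq_of_mul_letter_mem_branch hu hg
      exact ⟨hu', hz⟩

lemma pathIn_of_isReduced (l : I × Bool) (w : List (I × Bool)) (hw : IsReduced (l :: w)) :
    PathIn (insert 1 (startsWith l)) 1 (mk (l :: w)) := by
  have hmem : ∀ {w}, IsReduced (l :: w) → mk (l :: w) ∈ startsWith l := fun hw => by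
    simp [startsWith, hw.reduce_eq]
  induction w using List.reverseRecOn with
  | nil => exact .single ⟨.inl rfl, .inr (hmem hw), l, (one_mul _).symm⟩
  | append_singleton w k ih =>
    have hw' : IsReduced (l :: w) := List.IsChain.left_of_append hw
    exact (ih hw').tail ⟨.inr (hmem hw'), .inr (hmem hw), k, by simp⟩

lemma pathIn_insert_branch {g : FreeGroup I} {l : I × Bool} (hg : g ∈ branch y l) :
    PathIn (insert y (branch y l)) y g := by
  obtain ⟨w, hw⟩ : ∃ w, (y⁻¹ * g).toWord = l :: w := by
    rw [branch, startsWith, Set.mem_ofPred_eq, Set.mem_ofPred_eq] at hg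
    rcases hw : (y⁻¹ * g).toWord with _ | ⟨m, w⟩ <;> simp_all
  have hjoin := pathIn_of_isReduced l w (hw ▸ isReduced_toWord)
  rw [← hw, mk_toWord] at hjoin
  have hmem : ∀ z ∈ insert 1 (startsWith l), y * z ∈ insert y (branch y l) := by
    rintro z (rfl | hz)
    · exact .inl (mul_one y)
    · exact .inr (by simpa [branch] using hz)
  simpa using hjoin.mul_left y hmem

end Paths

section InvariantSubtree

variable {I : Type*}

/-- `T` spans a subtree of the Cayley tree of the free group that contains the base point `1` and
is invariant under left multiplication by the subgroup `X`. -/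
structure IsInvariantSubtree (X : Subgroup (FreeGroup I)) (T : Set (FreeGroup I)) : Prop where
  one_mem : 1 ∈ T
  mul_mem : ∀ x ∈ X, ∀ y ∈ T, x * y ∈ T
  pathIn_one : ∀ y ∈ T, PathIn T 1 y

/-- A set `S` certifying, by ping-pong, that `b` has infinite order and that `X` and `b` generate
their free product: nontrivial elements of `X` move `S` off itself, and nontrivial powers of `b`
move the complement of `S`, which contains `1`, into `S`. -/
structure IsPingPongSet {G : Type*} [Group G] (X : Subgroup G) (b : G) (S : Set G) : Prop where
  one_notMem : 1 ∉ S
  mul_notMem : ∀ x ∈ X, x ≠ 1 → ∀ g ∈ S, x * g ∉ S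
  zpow_mul_mem : ∀ n : ℤ, n ≠ 0 → ∀ g ∉ S, b ^ n * g ∈ S

lemma zpow_mul_mem_union {G : Type*} [Group G] {b : G} {P N : Set G} (hPN : Disjoint P N)
    (hb : ∀ g, b * g ∈ P ↔ g ∉ N) {n : ℤ} (hn : n ≠ 0) {g : G} (hg : g ∉ P ∪ N) :
    b ^ n * g ∈ P ∪ N := by
  have hb' : ∀ g, b⁻¹ * g ∈ N ↔ g ∉ P := fun g => by
    rw [← not_iff_not, ← hb, mul_inv_cancel_left, not_not]
  have hpos : ∀ k : ℕ, b ^ (k + 1) * g ∈ P := fun k => by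
    induction k with
    | zero => rw [zero_add, pow_one, hb]; exact fun hN => hg (.inr hN)
    | succ k ih => rw [pow_succ', mul_assoc, hb]; exact hPN.notMem_of_mem_left ih
  have hneg : ∀ k : ℕ, b⁻¹ ^ (k + 1) * g ∈ N := fun k => by
    induction k with
    | zero => rw [zero_add, pow_one, hb']; exact fun hP => hg (.inl hP)
    | succ k ih => rw [pow_succ', mul_assoc, hb']; exact hPN.notMem_of_mem_right ih
  rcases n with (_ | k) | k
  · exact absurd rfl hn
  · exact .inl (by rw [Int.ofNat_eq_natCast, zpow_natCast]; exact hpos k)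
  · exact .inr (by rw [zpow_negSucc, ← inv_pow]; exact hneg k)

namespace IsInvariantSubtree

variable {X : Subgroup (FreeGroup I)} {T : Set (FreeGroup I)} {v v' y y' g : FreeGroup I}

lemma pathIn (hT : IsInvariantSubtree X T) (hy : y ∈ T) (hy' : y' ∈ T) : PathIn T y y' :=
  (hT.pathIn_one y hy).symm.trans (hT.pathIn_one y' hy')

lemma mul_mem_iff (hT : IsInvariantSubtree X T) {x : FreeGroup I} (hx : x ∈ X) :
    x * y ∈ T ↔ y ∈ T :=
  ⟨fun h => by simpa using hT.mul_mem x⁻¹ (X.inv_mem hx) _ h, hT.mul_mem x hx y⟩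

variable [DecidableEq I] {l l' : I × Bool}

lemma notMem_branch (hT : IsInvariantSubtree X T) (hy : y ∈ T) (hl : y * FreeGroup.mk [l] ∉ T)
    (hg : g ∈ T) : g ∉ branch y l := fun hgy =>
  hl ((hT.pathIn hy hg).edge_mem (self_notMem_branch y l) hgy).2

/-- Half-trees hanging off `T` along distinct edges are disjoint: a path inside the first one
cannot enter the second. -/
lemma eq_of_mem_branch (hT : IsInvariantSubtree X T) (hy : y ∈ T) (hy' : y' ∈ T)
    (hl : y * FreeGroup.mk [l] ∉ T) (hl' : y' * FreeGroup.mk [l'] ∉ T)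
    (hg : g ∈ branch y l) (hg' : g ∈ branch y' l') :
    y = y' ∧ l = l' := by
  obtain ⟨hy'_mem, hedge⟩ :=
    (pathIn_insert_branch hg).edge_mem (hT.notMem_branch hy' hl' hy) hg'
  obtain rfl : y' = y := hy'_mem.resolve_right (hT.notMem_branch hy hl hy')
  have hne : y' * FreeGroup.mk [l'] ≠ y' := fun h => hl' (h.symm ▸ hy')
  have hbranch : y' * FreeGroup.mk [l'] ∈ branch y' l := hedge.resolve_left hne
  rw [branch, Set.mem_ofPred_eq, inv_mul_cancel_left, mk_singleton_mem_startsWith] at hbranch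
  exact ⟨rfl, hbranch.symm⟩

lemma eq_of_mul_mem_branch (hT : IsInvariantSubtree X T) {x : FreeGroup I} (hx : x ∈ X)
    (hy : y ∈ T) (hy' : y' ∈ T) (hl : y * FreeGroup.mk [l] ∉ T) (hl' : y' * FreeGroup.mk [l'] ∉ T)
    (hg : g ∈ branch y l) (hg' : x * g ∈ branch y' l') : x * y = y' ∧ l = l' :=
  hT.eq_of_mem_branch (hT.mul_mem x hx y hy) hy' (by rwa [mul_assoc, hT.mul_mem_iff hx]) hl'
    (mul_mem_branch_mul.2 hg) hg'

/-- If `b` moves `T` to a disjoint subtree at distance one, then the two half-trees beyond the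
connecting edge and beyond its translate by `b⁻¹` play ping-pong. -/
lemma isPingPongSet (hT : IsInvariantSubtree X T) {b : FreeGroup I} (hv : v ∈ T) (hv' : v' ∈ T)
    (hb : b * v' = v * FreeGroup.mk [l]) (hdisj : ∀ y ∈ T, b * y ∉ T) :
    IsPingPongSet X b (branch v l ∪ branch v' (l.1, !l.2)) := by
  have hl : v * FreeGroup.mk [l] ∉ T := hb ▸ hdisj v' hv'
  have hl' : v' * FreeGroup.mk [(l.1, !l.2)] ∉ T := fun h => hdisj _ h <| by
    rwa [← mul_assoc, hb, ← mk_singleton_inv, mul_inv_cancel_right]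
  have hne : l ≠ (l.1, !l.2) := fun h => Bool.not_ne_self l.2 (congrArg Prod.snd h).symm
  have hshift : ∀ g, b * g ∈ branch v l ↔ g ∉ branch v' (l.1, !l.2) := fun g => by
    have hword : v⁻¹ * (b * g) = FreeGroup.mk [l] * (v'⁻¹ * g) := by
      rw [eq_mul_inv_of_mul_eq hb]; group
    rw [branch, branch, Set.mem_ofPred_eq, Set.mem_ofPred_eq, hword, mk_mul_mem_startsWith_iff]
  refine ⟨?_, ?_, fun n hn g hg => zpow_mul_mem_union ?_ hshift hn hg⟩
  · rintro (h | h)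
    · exact hT.notMem_branch hv hl hT.one_mem h
    · exact hT.notMem_branch hv' hl' hT.one_mem h
  · rintro x hx hx1 g (hg | hg) (hxg | hxg)
    · exact hx1 (mul_eq_right.1 (hT.eq_of_mul_mem_branch hx hv hv hl hl hg hxg).1)
    · exact hne (hT.eq_of_mul_mem_branch hx hv hv' hl hl' hg hxg).2
    · exact hne (hT.eq_of_mul_mem_branch hx hv' hv hl' hl hg hxg).2.symm
    · exact hx1 (mul_eq_right.1 (hT.eq_of_mul_mem_branch hx hv' hv' hl' hl' hg hxg).1)
  · exact Set.disjoint_left.2 fun g hg hg' => hne (hT.eq_of_mem_branch hv hv' hl hl' hg hg').2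

end IsInvariantSubtree

end InvariantSubtree

section PingPong

variable {G : Type*} [Group G]

lemma coprodI_lift_injective_of_set {H : Bool → Type*} [∀ i, Group (H i)] [Infinite (H false)]
    (f : ∀ i, H i →* G) {S : Set G} (hone : 1 ∉ S)
    (htrue : ∀ h : H true, h ≠ 1 → ∀ g ∈ S, f true h * g ∉ S)
    (hfalse : ∀ h : H false, h ≠ 1 → ∀ g ∉ S, f false h * g ∈ S) :
    Function.Injective (Monoid.CoprodI.lift f) := by
  obtain ⟨h, hh⟩ := exists_ne (1 : H false)
  refine Monoid.CoprodI.lift_injective_of_ping_pong f (.inr ⟨false, ?_⟩)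
    (fun i => bif i then Sᶜ else S) ?_ ?_ ?_
  · exact (Cardinal.natCast_lt_aleph0 (n := 3)).le.trans (Cardinal.aleph0_le_mk _)
  · rintro (_ | _)
    · exact ⟨f false h * 1, hfalse h hh 1 hone⟩
    · exact ⟨1, hone⟩
  · rintro (_ | _) (_ | _) hij
    · exact absurd rfl hij
    · exact disjoint_compl_right
    · exact disjoint_compl_left
    · exact absurd rfl hij
  · rintro (_ | _) (_ | _) hij h hh
    · exact absurd rfl hij
    · exact Set.smul_set_subset_iff.2 (hfalse h hh)
    · exact Set.smul_set_subset_iff.2 (htrue h hh)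
    · exact absurd rfl hij

lemma exists_zpow_of_unit_eq (h : FreeGroup PUnit) : ∃ n : ℤ, of PUnit.unit ^ n = h := by
  rw [← Subgroup.mem_closure_singleton, ← Set.range_unique, FreeGroup.closure_range_of]
  trivial

lemma IsPingPongSet.injective_lift {X : Subgroup G} {b : G} {S : Set G} {α : Type*} {x : α → G}
    (hS : IsPingPongSet X b S) (hx : Function.Injective (lift x)) (hX : (lift x).range ≤ X) :
    Function.Injective (lift fun o : Option α => o.elim b x) := by
  let H : Bool → Type _ := fun i => FreeGroup (bif i then α else PUnit)
  let f : ∀ i, H i →* G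
    | true => lift x
    | false => lift fun _ => b
  let toCoprod : FreeGroup (Option α) →* Monoid.CoprodI H := lift fun o =>
    o.elim (Monoid.CoprodI.of (i := false) (of PUnit.unit))
      fun a => Monoid.CoprodI.of (i := true) (of a)
  let ofSummand : ∀ i, H i →* FreeGroup (Option α)
    | true => FreeGroup.map some
    | false => lift fun _ => of none
  have hs_some (a : α) : ofSummand true (of a) = of (some a) := FreeGroup.map.of
  have hs_none : ofSummand false (of PUnit.unit) = of none := FreeGroup.lift_apply_of
  have hf_some (a : α) : f true (of a) = x a := FreeGroup.lift_apply_of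
  have hf_none : f false (of PUnit.unit) = b := FreeGroup.lift_apply_of
  have hleft : (Monoid.CoprodI.lift ofSummand).comp toCoprod = MonoidHom.id _ := by
    ext (_ | a) <;> simp [toCoprod, hs_some, hs_none]
  have hfactor : (lift fun o : Option α => o.elim b x) =
      (Monoid.CoprodI.lift f).comp toCoprod := by
    ext (_ | a) <;> simp [toCoprod, hf_some, hf_none]
  have : Infinite (H false) := inferInstanceAs (Infinite (FreeGroup PUnit))
  have hinj : Function.Injective (Monoid.CoprodI.lift f) := by
    refine coprodI_lift_injective_of_set f hS.one_notMem
      (fun h hh => hS.mul_notMem _ (hX ⟨h, rfl⟩) ((map_ne_one_iff _ hx).2 hh)) fun h hh => ?_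
    obtain ⟨n, rfl⟩ : ∃ n : ℤ, (of PUnit.unit ^ n : H false) = h := exists_zpow_of_unit_eq h
    have hn : n ≠ 0 := by rintro rfl; exact hh (zpow_zero _)
    rw [map_zpow, hf_none]
    exact hS.zpow_mul_mem n hn
  rw [hfactor]
  exact hinj.comp (Function.LeftInverse.injective (DFunLike.congr_fun hleft))

lemma exists_isPingPongSet_range_map_some (α : Type*) :
    ∃ S, IsPingPongSet (FreeGroup.map (some : α → Option α)).range (of none) S := by
  classical
  have hT : IsInvariantSubtree (FreeGroup.map (some : α → Option α)).range
      (FreeGroup.map (some : α → Option α)).range := by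
    refine ⟨one_mem _, fun x hx y hy => mul_mem hx hy, ?_⟩
    rintro _ ⟨⟨w⟩, rfl⟩
    induction w using List.reverseRecOn with
    | nil => exact .refl
    | append_singleton w l ih =>
      exact ih.tail ⟨⟨_, rfl⟩, ⟨_, rfl⟩, (some l.1, l.2), by simp⟩
  refine ⟨_, hT.isPingPongSet (v := 1) (v' := 1) (l := (none, true)) (one_mem _) (one_mem _)
    (by simp [of]) ?_⟩
  rintro _ ⟨y, rfl⟩ ⟨z, hz⟩
  let χ : FreeGroup (Option α) →* Multiplicative ℤ :=
    lift fun o => o.elim (Multiplicative.ofAdd 1) fun _ => 1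
  have hχ : χ.comp (FreeGroup.map some) = 1 := by ext a; simp [χ]
  have hval : Multiplicative.ofAdd (1 : ℤ) = 1 :=
    calc Multiplicative.ofAdd (1 : ℤ) = χ (of none) * χ.comp (FreeGroup.map some) y := by
          simp [χ, hχ]
      _ = χ.comp (FreeGroup.map some) z := by
          rw [MonoidHom.comp_apply, MonoidHom.comp_apply, hz, map_mul]
      _ = 1 := by rw [hχ, MonoidHom.one_apply]
  exact absurd hval (by decide)

/-- Free products of injective homomorphisms are injective; here `y` is multiplied with the identity
of the infinite cyclic group on `none`. -/
lemma injective_lift_elim_map_some {α κ : Type*} {y : α → FreeGroup κ}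
    (hy : Function.Injective (lift y)) :
    Function.Injective (lift fun o : Option α =>
      o.elim (of none) fun a => FreeGroup.map some (y a) : _ → FreeGroup (Option κ)) := by
  obtain ⟨S, hS⟩ := exists_isPingPongSet_range_map_some κ
  have hcomp : (lift fun a => FreeGroup.map some (y a)) = (FreeGroup.map some).comp (lift y) := by
    ext a; simp
  refine hS.injective_lift ?_ ?_
  · rw [hcomp]
    exact (FreeGroup.map_injective (Option.some_injective κ)).comp hy
  · rw [hcomp, MonoidHom.range_comp]
    exact Subgroup.map_le_range _ _

end PingPong

section Hopf

lemma exists_perm_extending_mul_left {G : Type*} [Group G] (S : Set G) [Finite S] (a : G) :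
    ∃ σ : Equiv.Perm S, ∀ (h : S) (hh : a * h ∈ S), σ h = ⟨a * h, hh⟩ := by
  classical
  have := Fintype.ofFinite S
  let e : {h : S // a * h ∈ S} ≃ {h : S // a⁻¹ * h ∈ S} :=
    { toFun h := ⟨⟨a * h, h.2⟩, by simp⟩
      invFun h := ⟨⟨a⁻¹ * h, h.2⟩, by simp⟩
      left_inv h := by simp
      right_inv h := by simp }
  exact ⟨e.extendSubtype, fun h hh => e.extendSubtype_apply_of_mem h hh⟩

lemma exists_perm_lift_apply_one {α : Type*} (w : List (α × Bool)) :
    ∃ (S : Set (FreeGroup α)) (_ : Finite S) (σ : α → Equiv.Perm S) (o : S),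
      o.1 = 1 ∧ (lift σ (mk w) o).1 = mk w := by
  let S : Set (FreeGroup α) := mk '' {u | u <:+ w}
  have hS : Finite S := by
    refine Set.Finite.image _ ((List.finite_toSet w.tails).subset fun u hu => ?_)
    exact (List.mem_tails _ _).2 hu
  choose σ hσ using fun a : α => exists_perm_extending_mul_left S (of a)
  refine ⟨S, hS, σ, ⟨1, [], List.nil_suffix, rfl⟩, rfl, ?_⟩
  have hsuffix : ∀ u, u <:+ w → (lift σ (mk u) ⟨1, [], List.nil_suffix, rfl⟩).1 = mk u := by
    intro u hu
    induction u with
    | nil => rfl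
    | cons l u ih =>
      have hu' : u <:+ w := (List.suffix_cons l u).trans hu
      have hmem : mk u ∈ S := ⟨u, hu', rfl⟩
      have hmem_cons : mk [l] * mk u ∈ S := ⟨l :: u, hu, by simp⟩
      have hsplit : mk (l :: u) = mk [l] * mk u := by simp
      have ih' := Subtype.ext (a2 := ⟨mk u, hmem⟩) (ih hu')
      rw [hsplit, map_mul, Equiv.Perm.mul_apply, ih']
      rcases l with ⟨a, _ | _⟩
      · have hletter : mk [(a, false)] = (of a)⁻¹ := by simp [of, FreeGroup.invRev]
        rw [hletter] at hmem_cons ⊢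
        have hback : σ a ⟨(of a)⁻¹ * mk u, hmem_cons⟩ = ⟨mk u, hmem⟩ := by
          rw [hσ _ _ (by simpa using hmem)]
          simp
        rw [map_inv, FreeGroup.lift_apply_of, Equiv.Perm.inv_eq_iff_eq.2 hback.symm]
      · change (lift σ (of a) _).1 = of a * mk u
        rw [FreeGroup.lift_apply_of, hσ a _ hmem_cons]
  exact hsuffix w List.suffix_rfl

instance {α : Type*} : Group.ResiduallyFinite (FreeGroup α) := by
  refine Group.residuallyFinite_of_forall_exists_finite_monoidHom ?_
  rintro ⟨w⟩ hw
  obtain ⟨S, hS, σ, o, ho, hσ⟩ := exists_perm_lift_apply_one w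
  refine ⟨Equiv.Perm S, inferInstance, inferInstance, lift σ, fun hone => hw ?_⟩
  change lift σ (mk w) = 1 at hone
  change mk w = 1
  rw [← hσ, hone, Equiv.Perm.one_apply, ho]

lemma finite_monoidHom_of_fg (G H : Type*) [Group G] [Group.FG G] [Group H] [Finite H] :
    Finite (G →* H) := by
  obtain ⟨S, hS⟩ := Group.fg_def.1 ‹Group.FG G›
  exact Finite.of_injective (fun (f : G →* H) (s : S) => f s) fun f g hfg =>
    MonoidHom.eq_of_eqOn_dense hS fun s hs => congrFun hfg ⟨s, hs⟩

theorem injective_of_surjective_of_residuallyFinite {G : Type*} [Group G] [Group.FG G]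
    [Group.ResiduallyFinite G] (θ : G →* G) (hθ : Function.Surjective θ) :
    Function.Injective θ := by
  rw [injective_iff_map_eq_one]
  intro g hg
  by_contra hne
  obtain ⟨N, hN⟩ := Group.exists_finiteIndexNormalSubgroup_notMem g hne
  have : Finite (G →* G ⧸ N.toSubgroup) := finite_monoidHom_of_fg _ _
  have hinj : Function.Injective fun f : G →* G ⧸ N.toSubgroup => f.comp θ := fun f f' h =>
    (MonoidHom.cancel_right hθ).1 h
  obtain ⟨f, hf⟩ := Finite.surjective_of_injective hinj (QuotientGroup.mk' N.toSubgroup)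
  refine hN ((QuotientGroup.eq_one_iff g).1 ?_)
  change QuotientGroup.mk' N.toSubgroup g = 1
  rw [← hf]
  simp [hg]

end Hopf

section Rank

variable {G : Type*} [Group G]

/-- The family `v` is a basis of the subgroup `Z`; in particular, `Z` is free. -/
structure IsBasis {κ : Type*} (v : κ → G) (Z : Subgroup G) : Prop where
  injective : Function.Injective (lift v)
  range_eq : (lift v).range = Z

/-- `Z` is a free group of rank `n`. -/
def HasRank (Z : Subgroup G) (n : ℕ) : Prop :=
  ∃ v : Fin n → G, IsBasis v Z

lemma hasRank_bot : HasRank (⊥ : Subgroup G) 0 :=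
  ⟨Fin.elim0, fun _ _ _ => Subsingleton.elim _ _, by simp [FreeGroup.range_lift_eq_closure]⟩

lemma lift_map {κ κ' : Type*} (v : κ → G) (e : κ' → κ) (u : FreeGroup κ') :
    lift v (FreeGroup.map e u) = lift (v ∘ e) u :=
  DFunLike.congr_fun (g := lift (v ∘ e)) (f := (lift v).comp (FreeGroup.map e)) (by ext; simp) u

variable {κ κ' : Type*} {v : κ → G} {Z : Subgroup G} {n : ℕ}

lemma IsBasis.comp_equiv (hv : IsBasis v Z) (e : κ' ≃ κ) : IsBasis (v ∘ e) Z := by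
  have hlift : lift (v ∘ e) = (lift v).comp (FreeGroup.freeGroupCongr e).toMonoidHom := by
    ext a; simp
  constructor
  · rw [hlift]
    exact hv.injective.comp (MulEquiv.injective _)
  · rw [← hv.range_eq, FreeGroup.range_lift_eq_closure, FreeGroup.range_lift_eq_closure,
      e.surjective.range_comp]

lemma IsBasis.hasRank [Finite κ] (hv : IsBasis v Z) : HasRank Z (Nat.card κ) :=
  ⟨_, hv.comp_equiv (Finite.equivFin κ).symm⟩

lemma HasRank.isBasis_of_range_eq [Finite κ] (hZ : HasRank Z (Nat.card κ))
    (hv : (lift v).range = Z) : IsBasis v Z := by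
  refine ⟨?_, hv⟩
  obtain ⟨u, hu⟩ := hZ
  have hu' := hu.comp_equiv (Finite.equivFin κ)
  let e : FreeGroup κ ≃* (lift v).range :=
    (MonoidHom.ofInjective hu'.injective).trans
      (MulEquiv.subgroupCongr (hu'.range_eq.trans hv.symm))
  have hinj := injective_of_surjective_of_residuallyFinite
    (e.symm.toMonoidHom.comp (lift v).rangeRestrict)
    (e.symm.surjective.comp (lift v).rangeRestrict_surjective)
  exact fun x y hxy => hinj (congrArg e.symm (Subtype.ext hxy))

lemma range_lift_elim (b : G) (v : κ → G) :
    (lift fun o : Option κ => o.elim b v).range = (lift v).range ⊔ Subgroup.zpowers b := by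
  rw [FreeGroup.range_lift_eq_closure, FreeGroup.range_lift_eq_closure,
    Subgroup.zpowers_eq_closure, ← Subgroup.closure_union]
  congr 1
  ext g
  simp [Option.exists, eq_comm]

lemma IsPingPongSet.isBasis {b : G} {S : Set G} (hS : IsPingPongSet Z b S) (hv : IsBasis v Z) :
    IsBasis (fun o : Option κ => o.elim b v) (Z ⊔ Subgroup.zpowers b) :=
  ⟨hS.injective_lift hv.injective hv.range_eq.le, by rw [range_lift_elim, hv.range_eq]⟩

lemma IsBasis.hasRank_sup_zpowers [Finite κ] {b : G}
    (hv : IsBasis (fun o : Option κ => o.elim b v) (Z ⊔ Subgroup.zpowers b)) :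
    HasRank (Z ⊔ Subgroup.zpowers b) (Nat.card κ + 1) := by
  simpa using hv.hasRank

lemma IsBasis.of_elim {b : G}
    (hv : IsBasis (fun o : Option κ => o.elim b v) (Z ⊔ Subgroup.zpowers b))
    (hZ : (lift v).range = Z) : IsBasis v Z := by
  refine ⟨?_, hZ⟩
  have hinj := hv.injective.comp (FreeGroup.map_injective (Option.some_injective κ))
  simpa only [Function.comp_def, lift_map, Option.elim_some] using hinj

lemma IsBasis.elim_of_map {H : Type*} [Group H] {α : Type*} {x : α → H} {X : Subgroup H}
    {Ψ : H →* G} (hΨ : Function.Injective Ψ) {c : H}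
    (hv : IsBasis (fun o : Option κ => o.elim (Ψ c) v) (Z ⊔ Subgroup.zpowers (Ψ c)))
    (hZ : (lift v).range = Z) (hXZ : X.map Ψ ≤ Z) (hx : IsBasis x X) :
    IsBasis (fun o : Option α => o.elim c x) (X ⊔ Subgroup.zpowers c) := by
  have hxX : ∀ a, x a ∈ X := fun a => hx.range_eq ▸ ⟨of a, by simp⟩
  have hxv : ∀ a, ∃ y, lift v y = Ψ (x a) := fun a =>
    hZ.symm.le (hXZ (Subgroup.mem_map_of_mem Ψ (hxX a)))
  choose y hy using hxv
  have hy_inj : Function.Injective (lift y) := by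
    have hcomp : (lift v).comp (lift y) = Ψ.comp (lift x) := by ext a; simp [hy]
    refine .of_comp (f := lift v) ?_
    rw [← MonoidHom.coe_comp, hcomp]
    exact hΨ.comp hx.injective
  refine ⟨?_, by rw [range_lift_elim, hx.range_eq]⟩
  have hcomp : Ψ.comp (lift fun o : Option α => o.elim c x) =
      (lift fun o : Option κ => o.elim (Ψ c) v).comp
        (lift fun o : Option α => o.elim (of none) fun a => FreeGroup.map some (y a)) := by
    ext (_ | a)
    · simp
    · simp [lift_map, Function.comp_def, hy]
  refine .of_comp (f := Ψ) ?_
  rw [← MonoidHom.coe_comp, hcomp]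
  exact hv.injective.comp (injective_lift_elim_map_some hy_inj)

end Rank

section RelativeRank

variable {G : Type*} [Group G] {X Y Z : Subgroup G} {b c : G} {m n : ℕ}

/-- `Z` is generated by `X` together with `n` further elements. -/
def GeneratedOver (X Z : Subgroup G) (n : ℕ) : Prop :=
  ∃ b : Fin n → G, X ⊔ Subgroup.closure (Set.range b) = Z

/-- The relative rank of `Z` over `X` is `n`: this is the least number of elements that generate
`Z` together with `X`. -/
def HasRelRank (X Z : Subgroup G) (n : ℕ) : Prop :=
  IsLeast {k | GeneratedOver X Z k} n

lemma generatedOver_zero : GeneratedOver X Z 0 ↔ X = Z := by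
  simp [GeneratedOver]

lemma sup_closure_range_cons (X : Subgroup G) (b : G) (v : Fin n → G) :
    X ⊔ Subgroup.closure (Set.range (Fin.cons b v : Fin (n + 1) → G)) =
      X ⊔ Subgroup.zpowers b ⊔ Subgroup.closure (Set.range v) := by
  rw [Fin.range_cons, Set.insert_eq, Subgroup.closure_union, ← Subgroup.zpowers_eq_closure,
    sup_assoc]

lemma generatedOver_succ :
    GeneratedOver X Z (n + 1) ↔ ∃ b, GeneratedOver (X ⊔ Subgroup.zpowers b) Z n := by
  constructor
  · rintro ⟨b, hb⟩
    exact ⟨b 0, Fin.tail b, by rw [← sup_closure_range_cons, Fin.cons_self_tail, hb]⟩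
  · rintro ⟨b, v, hv⟩
    exact ⟨Fin.cons b v, by rw [sup_closure_range_cons, hv]⟩

lemma GeneratedOver.trans (h : GeneratedOver X Y m) (h' : GeneratedOver Y Z n) :
    GeneratedOver X Z (m + n) := by
  induction m generalizing X with
  | zero =>
    obtain rfl := generatedOver_zero.1 h
    rwa [zero_add]
  | succ m ih =>
    obtain ⟨b, hb⟩ := generatedOver_succ.1 h
    rw [Nat.succ_add]
    exact generatedOver_succ.2 ⟨b, ih hb⟩

lemma GeneratedOver.le (h : GeneratedOver X Z n) : X ≤ Z := by
  obtain ⟨b, rfl⟩ := h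
  exact le_sup_left

lemma exists_hasRelRank (h : GeneratedOver X Z m) : ∃ n, HasRelRank X Z n :=
  ⟨_, Nat.sInf_mem ⟨m, h⟩, fun _ hk => Nat.sInf_le hk⟩

lemma HasRelRank.notMem (hn : HasRelRank X Z (n + 1))
    (hb : GeneratedOver (X ⊔ Subgroup.zpowers b) Z n) : b ∉ X := fun hbX => by
  rw [sup_eq_left.2 (Subgroup.zpowers_le.2 hbX)] at hb
  exact absurd (hn.2 hb) (by omega)

lemma HasRelRank.of_succ (hn : HasRelRank X Z (n + 1))
    (hb : GeneratedOver (X ⊔ Subgroup.zpowers b) Z n) :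
    HasRelRank (X ⊔ Subgroup.zpowers b) Z n :=
  ⟨hb, fun _ hk => Nat.succ_le_succ_iff.1 (hn.2 (generatedOver_succ.2 ⟨b, hk⟩))⟩

lemma sup_zpowers_mul_mul {x x' : G} (hx : x ∈ X) (hx' : x' ∈ X) :
    X ⊔ Subgroup.zpowers (x * c * x') = X ⊔ Subgroup.zpowers c := by
  refine le_antisymm (sup_le le_sup_left ?_) (sup_le le_sup_left ?_) <;> rw [Subgroup.zpowers_le]
  · exact mul_mem (mul_mem (Subgroup.mem_sup_left hx)
      (Subgroup.mem_sup_right (Subgroup.mem_zpowers c))) (Subgroup.mem_sup_left hx')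
  · have hc := mul_mem (mul_mem (Subgroup.mem_sup_left (inv_mem hx))
      (Subgroup.mem_sup_right (Subgroup.mem_zpowers (x * c * x'))))
      (Subgroup.mem_sup_left (inv_mem hx'))
    simpa [mul_assoc] using hc

end RelativeRank

section Extension

open scoped Pointwise

variable {I : Type*} {X : Subgroup (FreeGroup I)} {T : Set (FreeGroup I)}

lemma subset_coe_mul {G : Type*} [Group G] (X : Subgroup G) (T : Set G) :
    T ⊆ (X : Set G) * T :=
  fun y hy => ⟨1, one_mem X, y, hy, one_mul y⟩

lemma mul_mem_coe_mul {G : Type*} [Group G] {X : Subgroup G} {T : Set G} {x y : G} (hx : x ∈ X)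
    (hy : y ∈ (X : Set G) * T) : x * y ∈ (X : Set G) * T := by
  obtain ⟨x', hx', z, hz, rfl⟩ := hy
  exact ⟨x * x', mul_mem hx hx', z, hz, mul_assoc x x' z⟩

/-- The elements of `X` that can be reached from `1` inside an `X`-invariant set. -/
def reachableSubgroup (X : Subgroup (FreeGroup I)) (T : Set (FreeGroup I))
    (hT : ∀ x ∈ X, ∀ y ∈ T, x * y ∈ T) : Subgroup (FreeGroup I) where
  carrier := {g | g ∈ X ∧ PathIn T 1 g}
  one_mem' := ⟨one_mem X, .refl⟩
  mul_mem' := by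
    rintro g h ⟨hg, hg_path⟩ ⟨hh, hh_path⟩
    exact ⟨mul_mem hg hh, hg_path.trans (by simpa using hh_path.mul_left g (hT g hg))⟩
  inv_mem' := by
    rintro g ⟨hg, hg_path⟩
    have hg_inv := inv_mem hg
    exact ⟨hg_inv, by simpa using hg_path.symm.mul_left g⁻¹ (hT g⁻¹ hg_inv)⟩

namespace IsInvariantSubtree

lemma sup_zpowers (hT : IsInvariantSubtree X T) {b v v' : FreeGroup I} (hv : v ∈ T) (hv' : v' ∈ T)
    (hb : b * v' = v ∨ ∃ l, b * v' = v * FreeGroup.mk [l]) :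
    IsInvariantSubtree (X ⊔ Subgroup.zpowers b)
      (((X ⊔ Subgroup.zpowers b : Subgroup (FreeGroup I)) : Set (FreeGroup I)) * T) := by
  set X₁ := X ⊔ Subgroup.zpowers b
  set T₁ : Set (FreeGroup I) := (X₁ : Set (FreeGroup I)) * T
  have hsub : T ⊆ T₁ := subset_coe_mul X₁ T
  have hmul : ∀ x ∈ X₁, ∀ y ∈ T₁, x * y ∈ T₁ := fun x hx y hy => mul_mem_coe_mul hx hy
  have hbX₁ : b ∈ X₁ := Subgroup.mem_sup_right (Subgroup.mem_zpowers b)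
  have hb_path : PathIn T₁ 1 b := by
    have hv_path : PathIn T₁ 1 v := (hT.pathIn_one v hv).mono hsub
    have hv'_path : PathIn T₁ (b * v') b := by
      simpa using (hT.pathIn_one v' hv').symm.mul_left b fun y hy => hmul b hbX₁ y (hsub hy)
    rcases hb with hb | ⟨l, hb⟩
    · exact hv_path.trans (hb ▸ hv'_path)
    · exact (hv_path.tail ⟨hsub hv, hmul b hbX₁ v' (hsub hv'), l, hb⟩).trans hv'_path
  have hreach : X₁ ≤ reachableSubgroup X₁ T₁ hmul := by
    refine sup_le (fun x hx => ⟨Subgroup.mem_sup_left hx, ?_⟩)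
      (Subgroup.zpowers_le.2 ⟨hbX₁, hb_path⟩)
    exact (hT.pathIn_one x (by simpa using hT.mul_mem x hx 1 hT.one_mem)).mono hsub
  refine ⟨hsub hT.one_mem, hmul, ?_⟩
  rintro _ ⟨x, hx, y, hy, rfl⟩
  refine (hreach hx).2.trans ?_
  simpa using (hT.pathIn_one y hy).mul_left x fun z hz => hmul x hx z (hsub hz)

lemma union_coe_mul_singleton (hT : IsInvariantSubtree X T) {v : FreeGroup I} (hv : v ∈ T)
    (l : I × Bool) :
    IsInvariantSubtree X (T ∪ (X : Set (FreeGroup I)) * {v * FreeGroup.mk [l]}) := by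
  refine ⟨.inl hT.one_mem, ?_, ?_⟩
  · rintro x hx y (hy | hy)
    · exact .inl (hT.mul_mem x hx y hy)
    · exact .inr (mul_mem_coe_mul hx hy)
  · rintro _ (hy | ⟨x, hx, _, rfl, rfl⟩)
    · exact (hT.pathIn_one _ hy).mono Set.subset_union_left
    · have hxv := hT.mul_mem x hx v hv
      refine .tail ((hT.pathIn_one _ hxv).mono Set.subset_union_left)
        ⟨.inl hxv, .inr ⟨x, hx, _, rfl, rfl⟩, l, ?_⟩
      exact (mul_assoc x v _).symm

end IsInvariantSubtree

end Extension

section Dichotomy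

open scoped Pointwise

variable {I : Type*} {X Z : Subgroup (FreeGroup I)} {T : Set (FreeGroup I)} {n : ℕ}

/-- Some element `c` can be taken as the first of `n` elements generating `Z` over `X`, and the
translate `c T` meets `T`; in the quotient graph of `T` this means that two vertices are folded
together. -/
def HasFold (X : Subgroup (FreeGroup I)) (T : Set (FreeGroup I)) (Z : Subgroup (FreeGroup I))
    (n : ℕ) : Prop :=
  ∃ c k, n = k + 1 ∧ (∃ u ∈ T, c * u ∈ T) ∧ GeneratedOver (X ⊔ Subgroup.zpowers c) Z k

/-- Either `X ⊔ ⟨b⟩` is a free product, or `b T` meets `T`; a fold found after adjoining `b` is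
translated back into `T`. -/
lemma HasRelRank.hasFold_or_hasRank_of_mul_eq (hn : HasRelRank X Z (n + 1))
    (ih : ∀ (Y : Subgroup (FreeGroup I)) (T : Set (FreeGroup I)), IsInvariantSubtree Y T →
      HasRelRank Y Z n → HasFold Y T Z n ∨ ∀ r, HasRank Y r → HasRank Z (r + n))
    (hT : IsInvariantSubtree X T) {b v v' : FreeGroup I} (hv : v ∈ T) (hv' : v' ∈ T)
    {l : I × Bool} (hb : b * v' = v * mk [l])
    (hgen : GeneratedOver (X ⊔ Subgroup.zpowers b) Z n) :
    HasFold X T Z (n + 1) ∨ ∀ r, HasRank X r → HasRank Z (r + (n + 1)) := by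
  classical
  by_cases hmeet : ∃ u ∈ T, b * u ∈ T
  · exact .inl ⟨b, n, rfl, hmeet, hgen⟩
  push Not at hmeet
  rcases ih _ _ (hT.sup_zpowers hv hv' (.inr ⟨l, hb⟩)) (hn.of_succ hgen) with
    ⟨c, k, rfl, ⟨_, ⟨g, hg, u, hu, rfl⟩, ⟨g', hg', u', hu', hcu⟩⟩, hc⟩ | hrank
  · refine .inl ⟨g'⁻¹ * c * g, k + 1, rfl, ⟨u, hu, ?_⟩, generatedOver_succ.2 ⟨b, ?_⟩⟩
    · change g' * u' = c * (g * u) at hcu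
      rwa [mul_assoc, mul_assoc, ← hcu, inv_mul_cancel_left]
    · rwa [sup_right_comm, sup_zpowers_mul_mul (inv_mem hg') hg]
  · refine .inr fun r ⟨x, hx⟩ => ?_
    have hXb := ((hT.isPingPongSet hv hv' hb hmeet).isBasis hx).hasRank_sup_zpowers
    rw [Nat.card_fin] at hXb
    rw [← add_assoc, add_right_comm]
    exact hrank (r + 1) hXb

lemma HasRelRank.hasFold_or_hasRank_of_word (hn : HasRelRank X Z (n + 1))
    (ih : ∀ (Y : Subgroup (FreeGroup I)) (T : Set (FreeGroup I)), IsInvariantSubtree Y T →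
      HasRelRank Y Z n → HasFold Y T Z n ∨ ∀ r, HasRank Y r → HasRank Z (r + n))
    (w : List (I × Bool)) (hT : IsInvariantSubtree X T) {v : FreeGroup I} (hv : v ∈ T)
    (hgen : GeneratedOver (X ⊔ Subgroup.zpowers (v * mk w)) Z n) :
    HasFold X T Z (n + 1) ∨ ∀ r, HasRank X r → HasRank Z (r + (n + 1)) := by
  induction w generalizing T v with
  | nil =>
    refine .inl ⟨_, n, rfl, ⟨1, hT.one_mem, ?_⟩, hgen⟩
    simpa [← FreeGroup.one_eq_mk] using hv
  | cons l w ihw =>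
    have hsplit : v * mk (l :: w) = v * mk [l] * mk w := by
      rw [mul_assoc, FreeGroup.mul_mk, List.singleton_append]
    have hwhisker : v * mk [l] ∈ T ∪ (X : Set (FreeGroup I)) * {v * mk [l]} :=
      .inr (subset_coe_mul X _ rfl)
    rw [hsplit] at hgen
    rcases ihw (hT.union_coe_mul_singleton hv l) hwhisker hgen with
      ⟨c, k, hk, ⟨_, hu | ⟨x, hx, _, rfl, rfl⟩, hcu | ⟨x', hx', _, rfl, hcu⟩⟩, hc⟩ | hrank
    · exact .inl ⟨c, k, hk, ⟨_, hu, hcu⟩, hc⟩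
    · obtain rfl := Nat.succ_injective hk
      rw [← sup_zpowers_mul_mul (inv_mem hx') (one_mem X)] at hc
      refine hn.hasFold_or_hasRank_of_mul_eq ih hT hv hu (l := l) ?_ hc
      change x' * (v * mk [l]) = c * _ at hcu
      rw [mul_one, mul_assoc, ← hcu, inv_mul_cancel_left]
    · obtain rfl := Nat.succ_injective hk
      rw [← sup_zpowers_mul_mul (one_mem X) hx, ← Subgroup.zpowers_inv] at hc
      refine hn.hasFold_or_hasRank_of_mul_eq ih hT hv hcu (l := l) ?_ hc
      simp [mul_assoc]
    · change x' * (v * mk [l]) = c * (x * (v * mk [l])) at hcu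
      rw [← mul_assoc c, mul_right_cancel_iff] at hcu
      obtain rfl := Nat.succ_injective hk
      refine absurd ?_ (hn.notMem hc)
      rw [eq_mul_inv_of_mul_eq hcu.symm]
      exact mul_mem hx' (inv_mem hx)
    · exact .inr hrank

theorem HasRelRank.hasFold_or_hasRank (hn : HasRelRank X Z n) (hT : IsInvariantSubtree X T) :
    HasFold X T Z n ∨ ∀ r, HasRank X r → HasRank Z (r + n) := by
  induction n generalizing X T with
  | zero =>
    obtain rfl := generatedOver_zero.1 hn.1
    exact .inr fun r hr => hr
  | succ n ih =>
    obtain ⟨b, hb⟩ := generatedOver_succ.1 hn.1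
    obtain ⟨w, rfl⟩ := Quot.exists_rep b
    refine hn.hasFold_or_hasRank_of_word (fun Y T hT hY => ih hY hT) w hT hT.one_mem ?_
    rwa [one_mul]

end Dichotomy

section FiniteRank

variable {G : Type*} [Group G] {X Z : Subgroup G} {n : ℕ}

lemma fg_iff_exists_generatedOver_bot : X.FG ↔ ∃ n, GeneratedOver ⊥ X n := by
  constructor
  · rintro ⟨S, rfl⟩
    refine ⟨S.card, fun i => S.equivFin.symm i, ?_⟩
    rw [bot_sup_eq]
    congr 1
    exact (S.equivFin.symm.surjective.range_comp Subtype.val).trans Subtype.range_coe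
  · rintro ⟨n, b, rfl⟩
    rw [bot_sup_eq]
    exact (Subgroup.fg_iff _).2 ⟨_, rfl, Set.finite_range b⟩

lemma HasRank.generatedOver_bot (h : HasRank X n) : GeneratedOver ⊥ X n := by
  obtain ⟨x, hx⟩ := h
  exact ⟨x, by rw [bot_sup_eq, ← FreeGroup.range_lift_eq_closure, hx.range_eq]⟩

lemma HasRank.exists_isBasis_elim {b : G} (h : HasRank (Z ⊔ Subgroup.zpowers b) (n + 1))
    (hZ : GeneratedOver ⊥ Z n) :
    ∃ z : Fin n → G, (lift z).range = Z ∧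
      IsBasis (fun o : Option (Fin n) => o.elim b z) (Z ⊔ Subgroup.zpowers b) := by
  obtain ⟨z, hz⟩ := hZ
  rw [bot_sup_eq, ← FreeGroup.range_lift_eq_closure] at hz
  refine ⟨z, hz, HasRank.isBasis_of_range_eq (by simpa using h) ?_⟩
  rw [range_lift_elim, hz]

variable {I : Type*}

lemma isInvariantSubtree_bot : IsInvariantSubtree (⊥ : Subgroup (FreeGroup I)) {1} := by
  refine ⟨rfl, ?_, ?_⟩
  · rintro x hx _ rfl
    simpa using hx
  · rintro _ rfl
    exact .refl

theorem exists_hasRank_of_fg {X : Subgroup (FreeGroup I)} (hX : X.FG) : ∃ n, HasRank X n := by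
  obtain ⟨m, hm⟩ := fg_iff_exists_generatedOver_bot.1 hX
  obtain ⟨n, hn⟩ := exists_hasRelRank hm
  rcases hn.hasFold_or_hasRank isInvariantSubtree_bot with
    ⟨c, k, rfl, ⟨_, rfl, hc⟩, hgen⟩ | hrank
  · exact absurd (by simpa using hc) (hn.notMem hgen)
  · exact ⟨_, hrank 0 hasRank_bot⟩

end FiniteRank

section Orbits

open scoped Pointwise

variable {I : Type*} {X Z : Subgroup (FreeGroup I)} {T : Set (FreeGroup I)} {k n : ℕ}

/-- `T` is contained in the union of at most `k` orbits of `X` under left multiplication. -/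
def CoveredByOrbits {G : Type*} [Group G] (X : Subgroup G) (T : Set G) (k : ℕ) : Prop :=
  ∃ S : Finset G, S.card ≤ k ∧ T ⊆ (X : Set G) * S

namespace CoveredByOrbits

variable {G : Type*} [Group G] {X X' : Subgroup G} {T : Set G}

lemma union_coe_mul_singleton (h : CoveredByOrbits X T k) (w : G) :
    CoveredByOrbits X (T ∪ (X : Set G) * {w}) (k + 1) := by
  classical
  obtain ⟨S, hS, hT⟩ := h
  refine ⟨insert w S, (Finset.card_insert_le w S).trans (by omega), Set.union_subset ?_ ?_⟩
  · exact hT.trans (Set.mul_subset_mul_left (by simp))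
  · exact Set.mul_subset_mul_left (by simp)

lemma coe_mul (h : CoveredByOrbits X T k) (hX : X ≤ X') :
    CoveredByOrbits X' ((X' : Set G) * T) k := by
  obtain ⟨S, hS, hT⟩ := h
  refine ⟨S, hS, ?_⟩
  rintro _ ⟨x, hx, y, hy, rfl⟩
  exact mul_mem_coe_mul hx (Set.mul_subset_mul_right hX (hT hy))

lemma ne_zero (h : CoveredByOrbits X T k) (hT : T.Nonempty) : k ≠ 0 := by
  rintro rfl
  obtain ⟨S, hS, hTS⟩ := h
  obtain ⟨y, hy⟩ := hT
  simpa [Finset.card_eq_zero.1 (Nat.le_zero.1 hS)] using hTS hy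

/-- A translate `c T` meeting `T` merges two of the orbits. -/
lemma sup_zpowers (h : CoveredByOrbits X T (k + 1)) {c u : G} (hc : c ∉ X) (hu : u ∈ T)
    (hcu : c * u ∈ T) :
    CoveredByOrbits (X ⊔ Subgroup.zpowers c)
      (((X ⊔ Subgroup.zpowers c : Subgroup G) : Set G) * T) k := by
  classical
  set X₁ := X ⊔ Subgroup.zpowers c
  have hX : X ≤ X₁ := le_sup_left
  have hcX₁ : c ∈ X₁ := Subgroup.mem_sup_right (Subgroup.mem_zpowers c)
  obtain ⟨S, hS, hT⟩ := h
  obtain ⟨x, hx, s, hs, rfl⟩ := hT hu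
  obtain ⟨x', hx', s', hs', hcs⟩ := hT hcu
  change x' * s' = c * (x * s) at hcs
  have hne : s ≠ s' := by
    rintro rfl
    rw [← mul_assoc, mul_right_cancel_iff] at hcs
    exact hc (eq_mul_inv_of_mul_eq hcs.symm ▸ mul_mem hx' (inv_mem hx))
  have hs'_orbit : s' = x'⁻¹ * c * x * s := by
    rw [mul_assoc, mul_assoc, ← hcs, inv_mul_cancel_left]
  refine ⟨S.erase s', by rw [Finset.card_erase_of_mem hs']; omega, ?_⟩
  rintro _ ⟨g, hg, y, hy, rfl⟩
  refine mul_mem_coe_mul hg ?_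
  obtain ⟨z, hz, s₀, hs₀, rfl⟩ := hT hy
  refine mul_mem_coe_mul (hX hz) ?_
  by_cases hs₀' : s₀ = s'
  · exact ⟨_, mul_mem (mul_mem (inv_mem (hX hx')) hcX₁) (hX hx), s,
      Finset.mem_erase.2 ⟨hne, hs⟩, (hs₀'.trans hs'_orbit).symm⟩
  · exact subset_coe_mul X₁ _ (by simp [hs₀', hs₀])

end CoveredByOrbits

lemma exists_isInvariantSubtree_mul_mem (w : List (I × Bool)) (hT : IsInvariantSubtree X T)
    (hk : CoveredByOrbits X T k) {v : FreeGroup I} (hv : v ∈ T) :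
    ∃ T' k', IsInvariantSubtree X T' ∧ CoveredByOrbits X T' k' ∧ v * mk w ∈ T' := by
  induction w generalizing T k v with
  | nil => exact ⟨T, k, hT, hk, by simpa [← FreeGroup.one_eq_mk] using hv⟩
  | cons l w ih =>
    have hsplit : v * mk (l :: w) = v * mk [l] * mk w := by
      rw [mul_assoc, FreeGroup.mul_mk, List.singleton_append]
    rw [hsplit]
    exact ih (hT.union_coe_mul_singleton hv l) (hk.union_coe_mul_singleton _)
      (.inr (subset_coe_mul X _ rfl))

lemma GeneratedOver.exists_isInvariantSubtree (h : GeneratedOver X Z n)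
    (hT : IsInvariantSubtree X T) (hk : CoveredByOrbits X T k) :
    ∃ T' k', IsInvariantSubtree Z T' ∧ CoveredByOrbits Z T' k' := by
  induction n generalizing X T k with
  | zero =>
    obtain rfl := generatedOver_zero.1 h
    exact ⟨T, k, hT, hk⟩
  | succ n ih =>
    obtain ⟨b, hb⟩ := generatedOver_succ.1 h
    obtain ⟨w, rfl⟩ := Quot.exists_rep b
    obtain ⟨T', k', hT', hk', hbT'⟩ := exists_isInvariantSubtree_mul_mem w hT hk hT.one_mem
    rw [one_mul] at hbT'
    exact ih hb (hT'.sup_zpowers hbT' hT'.one_mem (.inl (mul_one _))) (hk'.coe_mul le_sup_left)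

lemma exists_isInvariantSubtree_of_fg (hX : X.FG) :
    ∃ T k, IsInvariantSubtree X T ∧ CoveredByOrbits X T k := by
  obtain ⟨n, hn⟩ := fg_iff_exists_generatedOver_bot.1 hX
  exact hn.exists_isInvariantSubtree isInvariantSubtree_bot
    (k := 1) ⟨{1}, le_rfl, by simp⟩

end Orbits

section InvariantClosure

variable {G : Type*} [Group G] {Ψ : G →* G} {Z W A : Subgroup G}

/-- The smallest subgroup containing `Z` that `Ψ` maps into itself. -/
def invariantClosure (Ψ : G →* G) (Z : Subgroup G) : Subgroup G :=
  sInf {A | Z ≤ A ∧ A.map Ψ ≤ A}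

lemma invariantClosure_le (hZ : Z ≤ A) (hA : A.map Ψ ≤ A) : invariantClosure Ψ Z ≤ A :=
  sInf_le ⟨hZ, hA⟩

lemma le_invariantClosure (Ψ : G →* G) (Z : Subgroup G) : Z ≤ invariantClosure Ψ Z :=
  le_sInf fun _ hA => hA.1

lemma map_invariantClosure_le (Ψ : G →* G) (Z : Subgroup G) :
    (invariantClosure Ψ Z).map Ψ ≤ invariantClosure Ψ Z :=
  le_sInf fun _ hA => (Subgroup.map_mono (invariantClosure_le hA.1 hA.2)).trans hA.2

lemma invariantClosure_sup_map (hW : W ≤ Z) :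
    invariantClosure Ψ (Z ⊔ W.map Ψ) = invariantClosure Ψ Z := by
  refine le_antisymm (invariantClosure_le (sup_le (le_invariantClosure Ψ Z) ?_)
    (map_invariantClosure_le Ψ Z)) (invariantClosure_le ?_ (map_invariantClosure_le Ψ _))
  · exact (Subgroup.map_mono (hW.trans (le_invariantClosure Ψ Z))).trans
      (map_invariantClosure_le Ψ Z)
  · exact le_sup_left.trans (le_invariantClosure Ψ _)

end InvariantClosure

section Systems

/-- `X` is a finitely generated subgroup that `Ψ` maps into `Z`, and the smallest `Ψ`-invariant
subgroup containing `Z` is `A`. The number of elements needed to generate `Z` over `X` is what a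
good choice of `X` and `Z` minimizes. -/
structure IsSystem {G : Type*} [Group G] (Ψ : G →* G) (A X Z : Subgroup G) : Prop where
  fg : X.FG
  map_le : X.map Ψ ≤ Z
  invariantClosure_eq : invariantClosure Ψ Z = A

/-- The numbers of further generators in the systems for `A`. -/
def systemSizes {G : Type*} [Group G] (Ψ : G →* G) (A : Subgroup G) : Set ℕ :=
  {n | ∃ X Z, IsSystem Ψ A X Z ∧ GeneratedOver X Z n}

lemma fg_zpowers {G : Type*} [Group G] (c : G) : (Subgroup.zpowers c).FG :=
  (Subgroup.fg_iff _).2 ⟨{c}, (Subgroup.zpowers_eq_closure c).symm, Set.finite_singleton c⟩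

lemma IsSystem.sup {G : Type*} [Group G] {Ψ : G →* G} {A X W Z : Subgroup G}
    (h : IsSystem Ψ A X Z) (hW : W.FG) (hWZ : W ≤ Z) :
    IsSystem Ψ A (X ⊔ W) (Z ⊔ W.map Ψ) where
  fg := h.fg.sup hW
  map_le := by rw [Subgroup.map_sup]; exact sup_le_sup_right h.map_le _
  invariantClosure_eq := by rw [invariantClosure_sup_map hWZ, h.invariantClosure_eq]

variable {I : Type*} {Ψ : FreeGroup I →* FreeGroup I} {A X Z : Subgroup (FreeGroup I)}
  {T : Set (FreeGroup I)} {n k r : ℕ}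

/-- A fold along `c` turns `X`, `Z` into the system `X ⊔ ⟨c⟩`, `Z ⊔ ⟨Ψ c⟩` of the same size, whose
subtree has fewer orbits. There, by induction, `Ψ c` is free over `Z`; as `Ψ` is injective and maps
`X` into `Z`, already `c` is free over `X`. -/
theorem IsSystem.hasRank_of_coveredByOrbits (hΨ : Function.Injective Ψ)
    (hmin : n ∈ lowerBounds (systemSizes Ψ A)) (h : IsSystem Ψ A X Z) (hn : GeneratedOver X Z n)
    (hT : IsInvariantSubtree X T) (hk : CoveredByOrbits X T k) (hr : HasRank X r) :
    HasRank Z (r + n) := by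
  induction k generalizing X Z T r with
  | zero => exact absurd rfl (hk.ne_zero ⟨1, hT.one_mem⟩)
  | succ k ih =>
    have hrel : HasRelRank X Z n := ⟨hn, fun _ hj => hmin ⟨X, Z, h, hj⟩⟩
    rcases hrel.hasFold_or_hasRank hT with ⟨c, m, rfl, ⟨u, hu, hcu⟩, hc⟩ | hrank
    swap
    · exact hrank r hr
    have hcZ : Subgroup.zpowers c ≤ Z := le_sup_right.trans hc.le
    have hZ' : Z ⊔ (Subgroup.zpowers c).map Ψ = Z ⊔ Subgroup.zpowers (Ψ c) := by
      rw [MonoidHom.map_zpowers]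
    have hsys := h.sup (fg_zpowers c) hcZ
    have hgen : GeneratedOver (X ⊔ Subgroup.zpowers c) (Z ⊔ (Subgroup.zpowers c).map Ψ) (m + 1) :=
      hc.trans (generatedOver_succ.2 ⟨Ψ c, generatedOver_zero.2 hZ'.symm⟩)
    have hfree : ∀ s, HasRank (X ⊔ Subgroup.zpowers c) s →
        ∃ z : Fin (s + m) → FreeGroup I, (lift z).range = Z ∧
          IsBasis (fun o : Option (Fin (s + m)) => o.elim (Ψ c) z)
            (Z ⊔ Subgroup.zpowers (Ψ c)) := fun s hs => by
      refine HasRank.exists_isBasis_elim ?_ (hs.generatedOver_bot.trans hc)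
      rw [← hZ']
      exact ih hsys hgen (hT.sup_zpowers hcu hu (.inl rfl))
        (hk.sup_zpowers (hrel.notMem hc) hu hcu) hs
    obtain ⟨s, hs⟩ := exists_hasRank_of_fg hsys.fg
    obtain ⟨z, hz, hzc⟩ := hfree s hs
    obtain ⟨x, hx⟩ := hr
    have hXc := (hzc.elim_of_map hΨ hz h.map_le hx).hasRank_sup_zpowers
    rw [Nat.card_fin] at hXc
    obtain ⟨z, hz, hzc⟩ := hfree (r + 1) hXc
    exact ⟨_, (hzc.of_elim hz).comp_equiv (finCongr (by omega))⟩

theorem IsSystem.hasRank (hΨ : Function.Injective Ψ) (hmin : n ∈ lowerBounds (systemSizes Ψ A))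
    (h : IsSystem Ψ A X Z) (hn : GeneratedOver X Z n) (hr : HasRank X r) : HasRank Z (r + n) := by
  obtain ⟨T, k, hT, hk⟩ := exists_isInvariantSubtree_of_fg h.fg
  exact h.hasRank_of_coveredByOrbits hΨ hmin hn hT hk hr

end Systems

section Iterates

variable {G : Type*} [Group G] {α β : Type*}

/-- The family consisting of the `x i` and of all iterates `Ψ^k (b j)`. -/
def iterateFamily (Ψ : G →* G) (x : α → G) (b : β → G) : α ⊕ ℕ × β → G :=
  Sum.elim x fun p => Ψ^[p.1] (b p.2)

/-- The inclusion of the indices of `iterateFamily` that involve fewer than `k` iterations. -/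
def truncateIndex (α β : Type*) (k : ℕ) : α ⊕ Fin k × β → α ⊕ ℕ × β :=
  Sum.map id (Prod.map Fin.val id)

/-- The subgroup generated by the `x i` and by the iterates `Ψ^j (b i)` with `j < k`. -/
def iterateStage (Ψ : G →* G) (x : α → G) (b : β → G) (k : ℕ) : Subgroup G :=
  (lift (iterateFamily Ψ x b ∘ truncateIndex α β k)).range

lemma range_lift_sumElim (x : α → G) (b : β → G) :
    (lift (Sum.elim x b)).range = (lift x).range ⊔ Subgroup.closure (Set.range b) := by
  simp only [FreeGroup.range_lift_eq_closure, Set.Sum.elim_range, Subgroup.closure_union]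

lemma iterateStage_zero (Ψ : G →* G) (x : α → G) (b : β → G) :
    iterateStage Ψ x b 0 = (lift x).range := by
  have helim : iterateFamily Ψ x b ∘ truncateIndex α β 0 = Sum.elim x fun p => p.1.elim0 := by
    ext (a | p)
    · rfl
    · exact p.1.elim0
  rw [iterateStage, helim, range_lift_sumElim, Set.range_eq_empty, Subgroup.closure_empty,
    sup_bot_eq]

lemma iterateStage_succ (Ψ : G →* G) (x : α → G) (b : β → G) (k : ℕ) :
    iterateStage Ψ x b (k + 1) =
      iterateStage Ψ x b k ⊔ Subgroup.closure (Set.range fun j => Ψ^[k] (b j)) := by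
  simp only [iterateStage, FreeGroup.range_lift_eq_closure, ← Subgroup.closure_union]
  congr 1
  ext g
  simp only [Set.mem_union, Set.mem_range, Sum.exists, Prod.exists, Function.comp_apply,
    truncateIndex, iterateFamily, Sum.map_inl, Sum.map_inr, Sum.elim_inl, Sum.elim_inr,
    Prod.map_apply, id_eq, Fin.exists_fin_succ', Fin.val_castSucc, Fin.val_last, or_assoc]

lemma exists_subset_range_truncateIndex (s : Finset (α ⊕ ℕ × β)) :
    ∃ k, (s : Set (α ⊕ ℕ × β)) ⊆ Set.range (truncateIndex α β k) := by
  refine ⟨s.sup (Sum.elim 0 Prod.fst) + 1, ?_⟩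
  rintro (a | ⟨j, i⟩) hs
  · exact ⟨.inl a, rfl⟩
  · exact ⟨.inr (⟨j, Nat.lt_succ_of_le (Finset.le_sup (f := Sum.elim 0 Prod.fst) hs)⟩, i), rfl⟩

lemma injective_lift_of_finset_subset_range {κ ι : Type*} {κ' : ι → Type*} {v : κ → G}
    (e : ∀ k, κ' k → κ) (he : ∀ s : Finset κ, ∃ k, (s : Set κ) ⊆ Set.range (e k))
    (hv : ∀ k, Function.Injective (lift (v ∘ e k))) : Function.Injective (lift v) := by
  classical
  rw [injective_iff_map_eq_one]
  rintro ⟨w⟩ hw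
  obtain ⟨k, hk⟩ := he (w.map Prod.fst).toFinset
  obtain ⟨w, rfl⟩ : w ∈ Set.range (List.map (Prod.map (e k) id)) := by
    rw [Set.range_list_map]
    intro l hl
    obtain ⟨a, ha⟩ := hk (List.mem_toFinset.2 (List.mem_map_of_mem hl))
    exact ⟨(a, l.2), Prod.ext ha rfl⟩
  change lift v (FreeGroup.map (e k) (mk w)) = 1 at hw
  change FreeGroup.map (e k) (mk w) = 1
  rw [lift_map, map_eq_one_iff _ (hv k)] at hw
  rw [hw, map_one]

end Iterates

section FreeSystem

variable {I : Type*} {Ψ : FreeGroup I →* FreeGroup I} {A : Subgroup (FreeGroup I)}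

lemma IsSystem.iterateStage {α β : Type*} [Finite β] {x : α → FreeGroup I} {b : β → FreeGroup I}
    (h : IsSystem Ψ A (lift x).range (lift (Sum.elim x b)).range) (k : ℕ) :
    IsSystem Ψ A (iterateStage Ψ x b k) (FeighnHandel.iterateStage Ψ x b (k + 1)) := by
  induction k with
  | zero => simpa [iterateStage_succ, iterateStage_zero, range_lift_sumElim] using h
  | succ k ih =>
    let W := Subgroup.closure (Set.range fun j => Ψ^[k] (b j))
    have hmap : W.map Ψ = Subgroup.closure (Set.range fun j => Ψ^[k + 1] (b j)) := by
      rw [MonoidHom.map_closure, ← Set.range_comp]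
      simp only [Function.comp_def, Function.iterate_succ_apply']
    have hW : W ≤ FeighnHandel.iterateStage Ψ x b (k + 1) := by
      rw [iterateStage_succ]
      exact le_sup_right
    have hsup := ih.sup ((Subgroup.fg_iff W).2 ⟨_, rfl, Set.finite_range _⟩) hW
    rwa [hmap, ← iterateStage_succ, ← iterateStage_succ] at hsup

theorem exists_injective_lift_iterateFamily (hΨ : Function.Injective Ψ)
    {Z : Subgroup (FreeGroup I)} (hZ : Z.FG) :
    ∃ (r m : ℕ) (x : Fin r → FreeGroup I) (b : Fin m → FreeGroup I),
      Function.Injective (lift (iterateFamily Ψ x b)) ∧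
      (∀ i, Ψ (x i) ∈ (lift (Sum.elim x b)).range) ∧
      invariantClosure Ψ (lift (Sum.elim x b)).range = invariantClosure Ψ Z := by
  obtain ⟨n, hn⟩ := fg_iff_exists_generatedOver_bot.1 hZ
  have hbot : IsSystem Ψ (invariantClosure Ψ Z) ⊥ Z := ⟨Subgroup.FG.bot, by simp, rfl⟩
  have hne : (systemSizes Ψ (invariantClosure Ψ Z)).Nonempty := ⟨n, ⊥, Z, hbot, hn⟩
  obtain ⟨m, ⟨X, Z', hsys, b, rfl⟩, hmin⟩ : ∃ m, IsLeast (systemSizes Ψ (invariantClosure Ψ Z)) m :=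
    ⟨_, Nat.sInf_mem hne, fun _ hk => Nat.sInf_le hk⟩
  obtain ⟨r, x, hx⟩ := exists_hasRank_of_fg hsys.fg
  rw [← hx.range_eq, ← range_lift_sumElim] at hsys
  refine ⟨r, m, x, b, ?_, fun i => ?_, hsys.invariantClosure_eq⟩
  · have hrank : ∀ k, HasRank (iterateStage Ψ x b k) (r + k * m) := fun k => by
      induction k with
      | zero => simpa [iterateStage_zero] using ⟨x, hx.injective, rfl⟩
      | succ k ih =>
        rw [Nat.succ_mul, ← add_assoc]
        exact (hsys.iterateStage k).hasRank hΨ hmin ⟨_, (iterateStage_succ Ψ x b k).symm⟩ ih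
    refine injective_lift_of_finset_subset_range (truncateIndex (Fin r) (Fin m))
      exists_subset_range_truncateIndex fun k => ?_
    exact (HasRank.isBasis_of_range_eq (Z := iterateStage Ψ x b k) (by simpa using hrank k)
      rfl).injective
  · exact hsys.map_le (Subgroup.mem_map_of_mem Ψ ⟨of i, FreeGroup.lift_apply_of⟩)

end FreeSystem

section NormalForm

variable {G P : Type*} [Group G] [Group P] {t : P} {A : Subgroup P}

lemma pow_mul_mul_pow_inv_mem (hA : ∀ y ∈ A, t * y * t⁻¹ ∈ A) (n : ℕ) {y : P} (hy : y ∈ A) :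
    t ^ n * y * (t ^ n)⁻¹ ∈ A := by
  induction n with
  | zero => simpa using hy
  | succ n ih => simpa only [pow_succ', mul_inv_rev, mul_assoc] using hA _ ih

lemma exists_eq_of_mem_zpowers_sup (hA : ∀ y ∈ A, t * y * t⁻¹ ∈ A) {g : P}
    (hg : g ∈ Subgroup.zpowers t ⊔ A) : ∃ p q : ℕ, ∃ y ∈ A, g = (t ^ p)⁻¹ * y * t ^ q := by
  let R : Subgroup P :=
    { carrier := {g | ∃ p q : ℕ, ∃ y ∈ A, g = (t ^ p)⁻¹ * y * t ^ q}
      one_mem' := ⟨0, 0, 1, one_mem _, by simp⟩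
      inv_mem' := by
        rintro _ ⟨p, q, y, hy, rfl⟩
        exact ⟨q, p, y⁻¹, inv_mem hy, by group⟩
      mul_mem' := by
        rintro _ _ ⟨p, q, y, hy, rfl⟩ ⟨p', q', y', hy', rfl⟩
        rcases le_total p' q with h | h <;> obtain ⟨d, rfl⟩ := Nat.exists_eq_add_of_le' h
        · refine ⟨p, d + q', y * (t ^ d * y' * (t ^ d)⁻¹),
            mul_mem hy (pow_mul_mul_pow_inv_mem hA d hy'), ?_⟩
          simp only [pow_add]
          group
        · refine ⟨d + p, q', t ^ d * y * (t ^ d)⁻¹ * y',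
            mul_mem (pow_mul_mul_pow_inv_mem hA d hy) hy', ?_⟩
          simp only [pow_add]
          group }
  have hR : Subgroup.zpowers t ⊔ A ≤ R := by
    rw [sup_le_iff, Subgroup.zpowers_le]
    exact ⟨⟨0, 1, 1, one_mem _, by simp⟩, fun y hy => ⟨0, 0, y, hy, by simp⟩⟩
  exact hR hg

lemma injective_of_zpowers_sup_eq_top {π : P →* G} (hA : ∀ y ∈ A, t * y * t⁻¹ ∈ A)
    (htop : Subgroup.zpowers t ⊔ A = ⊤) (hker : ∀ y ∈ A, π y = 1 → y = 1)
    (hpow : ∀ n : ℤ, π t ^ n ∈ A.map π → n = 0) : Function.Injective π := by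
  rw [injective_iff_map_eq_one]
  intro g hg
  obtain ⟨p, q, y, hy, rfl⟩ := exists_eq_of_mem_zpowers_sup hA (htop ▸ Subgroup.mem_top g)
  have hπy : π y = π t ^ (p - q : ℤ) := by
    rw [map_mul, map_mul, map_inv, map_pow, map_pow, mul_assoc, inv_mul_eq_one] at hg
    rw [zpow_sub, zpow_natCast, zpow_natCast, hg, mul_inv_cancel_right]
  obtain rfl : p = q := by have := hpow _ ⟨y, hy, hπy⟩; omega
  rw [sub_self, zpow_zero] at hπy
  rw [hker y hy hπy, mul_one, inv_mul_cancel]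

end NormalForm

section Presentation

variable {G : Type*} [Group G] {α β : Type*} {x : α → G} {b : β → G}

lemma comp_iterateFamily {H : Type*} [Group H] {Ψ : G →* G} {Θ : H →* H} {π : G →* H}
    (hπ : Function.Semiconj π Ψ Θ) (x : α → G) (b : β → G) :
    π ∘ iterateFamily Ψ x b = iterateFamily Θ (π ∘ x) (π ∘ b) := by
  ext (i | ⟨k, j⟩)
  · rfl
  · exact hπ.iterate_right k (b j)

lemma map_lift {H : Type*} [Group H] (π : G →* H) (x : α → G) (u : FreeGroup α) :
    π (lift x u) = lift (π ∘ x) u :=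
  FreeGroup.lift_unique (π.comp (lift x)) fun _ => congrArg π FreeGroup.lift_apply_of

lemma range_lift_sumElim_le (Ψ : G →* G) (x : α → G) (b : β → G) :
    (lift (Sum.elim x b)).range ≤ (lift (iterateFamily Ψ x b)).range := by
  rw [FreeGroup.range_lift_eq_closure, FreeGroup.range_lift_eq_closure]
  refine Subgroup.closure_mono ?_
  rintro _ ⟨i | j, rfl⟩
  · exact ⟨.inl i, rfl⟩
  · exact ⟨.inr (0, j), rfl⟩

lemma map_range_lift_iterateFamily_le {Ψ : G →* G}
    (hx : ∀ i, Ψ (x i) ∈ (lift (Sum.elim x b)).range) :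
    (lift (iterateFamily Ψ x b)).range.map Ψ ≤ (lift (iterateFamily Ψ x b)).range := by
  nth_rw 1 [FreeGroup.range_lift_eq_closure]
  rw [MonoidHom.map_closure, Subgroup.closure_le]
  rintro _ ⟨_, ⟨i | ⟨k, j⟩, rfl⟩, rfl⟩
  · exact range_lift_sumElim_le Ψ x b (hx i)
  · exact ⟨of (.inr (k + 1, j)), by simp [iterateFamily, Function.iterate_succ_apply']⟩

/-- The relators `t xᵢ t⁻¹ wᵢ⁻¹` of a mapping torus of a map defined on a part `α` of the basis
`α ⊕ β` of a free group only; the generator `none` plays the role of the stable letter `t`. -/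
def partialTorusRels (w : α → FreeGroup (α ⊕ β)) : Set (FreeGroup (Option (α ⊕ β))) :=
  Set.range fun i =>
    of none * of (some (.inl i)) * (of none)⁻¹ * (FreeGroup.map some (w i))⁻¹

/-- The group `⟨t, xᵢ (i ∈ α), bⱼ (j ∈ β) | t xᵢ t⁻¹ = wᵢ (i ∈ α)⟩`. -/
abbrev PartialTorus (w : α → FreeGroup (α ⊕ β)) : Type _ := PresentedGroup (partialTorusRels w)

namespace PartialTorus

variable (w : α → FreeGroup (α ⊕ β))

/-- The stable letter `t`. -/
def stable : PartialTorus w := PresentedGroup.of none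

/-- The generators `xᵢ` and `bⱼ`. -/
def gen (c : α ⊕ β) : PartialTorus w := PresentedGroup.of (some c)

lemma mk_map_some (u : FreeGroup (α ⊕ β)) :
    PresentedGroup.mk (partialTorusRels w) (FreeGroup.map some u) = lift (gen w) u := by
  have hcomp : (PresentedGroup.mk (partialTorusRels w)).comp (FreeGroup.map some) =
      lift (gen w) := by
    ext c
    simp only [MonoidHom.comp_apply, FreeGroup.map.of, FreeGroup.lift_apply_of]
    rfl
  exact DFunLike.congr_fun hcomp u

lemma stable_mul_gen_mul (i : α) :
    stable w * gen w (.inl i) * (stable w)⁻¹ = lift (gen w) (w i) := by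
  have hrel := PresentedGroup.one_of_mem (rels := partialTorusRels w) ⟨i, rfl⟩
  simp only [map_mul, map_inv, mk_map_some] at hrel
  exact mul_inv_eq_one.1 hrel

/-- The family of the `xᵢ` and of the conjugates of the `bⱼ` by the powers of `t`. -/
def conjFamily : α ⊕ ℕ × β → PartialTorus w :=
  iterateFamily (MulAut.conj (stable w)).toMonoidHom (gen w ∘ .inl) (gen w ∘ .inr)

lemma gen_mem_range_conjFamily (c : α ⊕ β) : gen w c ∈ (lift (conjFamily w)).range := by
  refine range_lift_sumElim_le _ _ _ ⟨of c, ?_⟩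
  rw [FreeGroup.lift_apply_of, Sum.elim_comp_inl_inr]

lemma stable_mul_mul_mem_range_conjFamily :
    ∀ y ∈ (lift (conjFamily w)).range, stable w * y * (stable w)⁻¹ ∈ (lift (conjFamily w)).range :=
  fun _ hy => map_range_lift_iterateFamily_le
    (fun i => ⟨w i, by rw [Sum.elim_comp_inl_inr]; exact (stable_mul_gen_mul w i).symm⟩)
    (Subgroup.mem_map_of_mem _ hy)

lemma zpowers_stable_sup_range_conjFamily :
    Subgroup.zpowers (stable w) ⊔ (lift (conjFamily w)).range = ⊤ := by
  rw [eq_top_iff, ← PresentedGroup.closure_range_of, Subgroup.closure_le]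
  rintro _ ⟨_ | c, rfl⟩
  · exact Subgroup.mem_sup_left (Subgroup.mem_zpowers _)
  · exact Subgroup.mem_sup_right (gen_mem_range_conjFamily w c)

variable {w}

/-- The homomorphism given by images of the generators satisfying the relations. -/
def toGroup (s : G) (v : α ⊕ β → G) (hw : ∀ i, s * v (.inl i) * s⁻¹ = lift v (w i)) :
    PartialTorus w →* G :=
  PresentedGroup.toGroup (f := fun o => o.elim s v) <| by
    rintro _ ⟨i, rfl⟩
    simp only [map_mul, map_inv, lift_map, FreeGroup.lift_apply_of, Option.elim_none,
      Option.elim_some, hw, mul_inv_eq_one]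
    rfl

variable {s : G} {v : α ⊕ β → G} (hw : ∀ i, s * v (.inl i) * s⁻¹ = lift v (w i))

lemma toGroup_stable : toGroup s v hw (stable w) = s := PresentedGroup.toGroup.of _

lemma toGroup_gen (c : α ⊕ β) : toGroup s v hw (gen w c) = v c := PresentedGroup.toGroup.of _

lemma range_toGroup : (toGroup s v hw).range = Subgroup.zpowers s ⊔ (lift v).range := by
  have hgen : Set.range (PresentedGroup.of (rels := partialTorusRels w)) =
      {stable w} ∪ Set.range (gen w) := by
    ext g
    simp only [Set.mem_range, Option.exists, Set.mem_union, Set.mem_singleton_iff, stable, gen,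
      eq_comm]
  rw [MonoidHom.range_eq_map, ← PresentedGroup.closure_range_of, MonoidHom.map_closure, hgen,
    Set.image_union, Set.image_singleton, ← Set.range_comp, Subgroup.closure_union,
    FreeGroup.range_lift_eq_closure, Subgroup.zpowers_eq_closure, toGroup_stable]
  simp only [Function.comp_def, toGroup_gen]

lemma toGroup_lift_conjFamily (u : FreeGroup (α ⊕ ℕ × β)) :
    toGroup s v hw (lift (conjFamily w) u) =
      lift (iterateFamily (MulAut.conj s).toMonoidHom (v ∘ .inl) (v ∘ .inr)) u := by
  have hsemi : Function.Semiconj (toGroup s v hw) (MulAut.conj (stable w)).toMonoidHom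
      (MulAut.conj s).toMonoidHom := fun g => by
    simp [toGroup_stable]
  rw [map_lift, conjFamily, comp_iterateFamily hsemi, ← Function.comp_assoc, ← Function.comp_assoc,
    show toGroup s v hw ∘ gen w = v from funext (toGroup_gen hw)]

end PartialTorus

theorem isFinitelyPresented_zpowers_sup [Finite α] [Finite β] {s : G}
    (hinj : Function.Injective (lift (iterateFamily (MulAut.conj s).toMonoidHom x b)))
    (hx : ∀ i, s * x i * s⁻¹ ∈ (lift (Sum.elim x b)).range)
    (hpow : ∀ n : ℤ,
      s ^ n ∈ (lift (iterateFamily (MulAut.conj s).toMonoidHom x b)).range → n = 0) :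
    Group.IsFinitelyPresented ↥(Subgroup.zpowers s ⊔ (lift (Sum.elim x b)).range) := by
  choose w hw using hx
  have hw' : ∀ i, s * Sum.elim x b (.inl i) * s⁻¹ = lift (Sum.elim x b) (w i) :=
    fun i => (hw i).symm
  let π := PartialTorus.toGroup s (Sum.elim x b) hw'
  have hπ : ∀ u, π (lift (PartialTorus.conjFamily w) u) =
      lift (iterateFamily (MulAut.conj s).toMonoidHom x b) u :=
    PartialTorus.toGroup_lift_conjFamily hw'
  have hπinj : Function.Injective π := by
    refine injective_of_zpowers_sup_eq_top (PartialTorus.stable_mul_mul_mem_range_conjFamily w)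
      (PartialTorus.zpowers_stable_sup_range_conjFamily w) ?_ fun n hn => hpow n ?_
    · rintro _ ⟨u, rfl⟩ hu
      rw [hπ, map_eq_one_iff _ hinj] at hu
      rw [hu, map_one]
    · obtain ⟨_, ⟨u, rfl⟩, hu⟩ := hn
      exact ⟨u, by rw [← hπ, hu, PartialTorus.toGroup_stable]⟩
  rw [← PartialTorus.range_toGroup hw']
  have : Finite (partialTorusRels w) := Set.finite_range _
  exact Group.IsFinitelyPresented.equiv (MonoidHom.ofInjective hπinj)

end Presentation

section StableLetter

variable {F G : Type*} [Group F] [Group G] {ι : F →* G} {Ψ : F →* F} {s : G}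

/-- Conjugation by `s` induces `Ψ` on the embedded group `ι : F → G`, and `s` has infinite order
modulo `ι F`; that is, `s` and `ι F` generate the ascending HNN extension of `F` along `Ψ`. -/
structure IsStableLetter (ι : F →* G) (Ψ : F →* F) (s : G) : Prop where
  injective : Function.Injective ι
  mul_mul_inv (f : F) : s * ι f * s⁻¹ = ι (Ψ f)
  eq_zero_of_zpow_mem (n : ℤ) : s ^ n ∈ ι.range → n = 0

namespace IsStableLetter

lemma injective_endomorphism (h : IsStableLetter ι Ψ s) : Function.Injective Ψ := fun f g hfg => by
  have hconj : s * ι f * s⁻¹ = s * ι g * s⁻¹ := by rw [h.mul_mul_inv, h.mul_mul_inv, hfg]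
  exact h.injective (mul_left_cancel (mul_right_cancel hconj))

lemma zpowers_sup_map_invariantClosure (h : IsStableLetter ι Ψ s) (Z : Subgroup F) :
    Subgroup.zpowers s ⊔ (invariantClosure Ψ Z).map ι = Subgroup.zpowers s ⊔ Z.map ι := by
  refine le_antisymm (sup_le le_sup_left ?_)
    (sup_le_sup_left (Subgroup.map_mono (le_invariantClosure Ψ Z)) _)
  rw [Subgroup.map_le_iff_le_comap]
  refine invariantClosure_le (Subgroup.map_le_iff_le_comap.1 le_sup_right) ?_
  rintro _ ⟨f, hf, rfl⟩
  have hs : s ∈ Subgroup.zpowers s ⊔ Z.map ι := Subgroup.mem_sup_left (Subgroup.mem_zpowers s)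
  rw [Subgroup.mem_comap, ← h.mul_mul_inv]
  exact mul_mem (mul_mem hs hf) (inv_mem hs)

end IsStableLetter

end StableLetter

theorem IsStableLetter.isFinitelyPresented {I G : Type*} [Group G] {ι : FreeGroup I →* G}
    {Ψ : FreeGroup I →* FreeGroup I} {s : G} (h : IsStableLetter ι Ψ s)
    {Z : Subgroup (FreeGroup I)} (hZ : Z.FG) :
    Group.IsFinitelyPresented ↥(Subgroup.zpowers s ⊔ Z.map ι) := by
  obtain ⟨r, m, x, b, hinj, hx, hclosure⟩ :=
    exists_injective_lift_iterateFamily h.injective_endomorphism hZ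
  have hsemi : Function.Semiconj ι Ψ (MulAut.conj s).toMonoidHom := fun f => (h.mul_mul_inv f).symm
  have hfamily : lift (iterateFamily (MulAut.conj s).toMonoidHom (ι ∘ x) (ι ∘ b)) =
      ι.comp (lift (iterateFamily Ψ x b)) := by
    ext u
    rw [← comp_iterateFamily hsemi, ← map_lift, MonoidHom.comp_apply]
  have hrange : (lift (Sum.elim (ι ∘ x) (ι ∘ b))).range = (lift (Sum.elim x b)).range.map ι := by
    rw [← Sum.comp_elim, MonoidHom.map_range]
    congr 1
    ext u
    rw [← map_lift, MonoidHom.comp_apply]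
  rw [← h.zpowers_sup_map_invariantClosure, ← hclosure, h.zpowers_sup_map_invariantClosure,
    ← hrange]
  refine isFinitelyPresented_zpowers_sup ?_ (fun i => ?_) fun n hn => h.eq_zero_of_zpow_mem n ?_
  · rw [hfamily]
    exact h.injective.comp hinj
  · rw [hrange, Function.comp_apply, h.mul_mul_inv]
    exact Subgroup.mem_map_of_mem ι (hx i)
  · rw [hfamily, ← MonoidHom.map_range] at hn
    exact Subgroup.map_le_range ι _ hn

section FGSubgroups

variable {G H : Type*} [Group G] [Group H]

lemma isFinitelyPresented_of_map_conj {K : Subgroup G} (g : G)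
    [Group.IsFinitelyPresented ↥(K.map (MulAut.conj g).toMonoidHom)] :
    Group.IsFinitelyPresented K :=
  .equiv (K.equivMapOfInjective (MulAut.conj g).toMonoidHom (MulAut.conj g).injective).symm

lemma isFinitelyPresented_map_of_fg {I : Type*} {Z : Subgroup (FreeGroup I)} (hZ : Z.FG)
    {ι : FreeGroup I →* G} (hι : Function.Injective ι) : Group.IsFinitelyPresented ↥(Z.map ι) := by
  obtain ⟨n, v, hv⟩ := exists_hasRank_of_fg hZ
  exact .equiv (((MonoidHom.ofInjective hv.injective).trans (.subgroupCongr hv.range_eq)).trans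
    (Z.equivMapOfInjective ι hι))

lemma fg_map {K : Subgroup G} (hK : K.FG) (f : G →* H) : (K.map f).FG := by
  rw [Subgroup.fg_iff_submonoid_fg] at hK ⊢
  exact hK.map f

lemma exists_fg_map_eq {ι : G →* H} (hι : Function.Injective ι) {K : Subgroup H} (hK : K.FG)
    (hle : K ≤ ι.range) : ∃ Z : Subgroup G, Z.FG ∧ Z.map ι = K := by
  have hmap : (K.comap ι).map ι = K := Subgroup.map_comap_eq_self hle
  refine ⟨K.comap ι, ?_, hmap⟩
  rw [Subgroup.fg_iff_submonoid_fg] at hK ⊢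
  refine Submonoid.FG.map_injective ι hι ?_
  rwa [← hmap] at hK

lemma exists_mem_zpowers_map_eq (χ : G →* Multiplicative ℤ) (K : Subgroup G) :
    ∃ h ∈ K, 0 ≤ (χ h).toAdd ∧ Subgroup.zpowers (χ h) = K.map χ := by
  obtain ⟨_, hz⟩ := (K.map χ).isCyclic_iff_exists_zpowers_eq_top.1 inferInstance
  obtain ⟨h, hh, rfl⟩ : _ ∈ K.map χ := hz ▸ Subgroup.mem_zpowers _
  rcases le_total 0 (χ h).toAdd with hpos | hneg
  · exact ⟨h, hh, hpos, hz⟩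
  · refine ⟨h⁻¹, inv_mem hh, ?_, ?_⟩
    · rw [map_inv, toAdd_inv]
      omega
    · rw [map_inv, Subgroup.zpowers_inv, hz]

lemma exists_zpowers_sup_eq_of_fg (χ : G →* Multiplicative ℤ) {K : Subgroup G} (hK : K.FG) :
    ∃ h, 0 ≤ (χ h).toAdd ∧ ∃ L ≤ χ.ker, L.FG ∧ Subgroup.zpowers h ⊔ L = K := by
  obtain ⟨h, hh, hpos, hz⟩ := exists_mem_zpowers_map_eq χ K
  have hexp : ∀ g ∈ K, ∃ k : ℤ, χ h ^ k = χ g := fun g hg => by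
    rw [← Subgroup.mem_zpowers_iff, hz]
    exact Subgroup.mem_map_of_mem χ hg
  choose! k hk using hexp
  obtain ⟨S, hS, hfin⟩ := (Subgroup.fg_iff K).1 hK
  have hSK : ∀ g ∈ S, g ∈ K := fun g hg => hS ▸ Subgroup.subset_closure hg
  refine ⟨h, hpos, Subgroup.closure ((fun g => g * (h ^ k g)⁻¹) '' S), ?_,
    (Subgroup.fg_iff _).2 ⟨_, rfl, hfin.image _⟩, le_antisymm ?_ ?_⟩
  · rw [Subgroup.closure_le]
    rintro _ ⟨g, hg, rfl⟩
    simp [hk g (hSK g hg)]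
  · rw [sup_le_iff, Subgroup.zpowers_le, Subgroup.closure_le]
    refine ⟨hh, ?_⟩
    rintro _ ⟨g, hg, rfl⟩
    exact mul_mem (hSK g hg) (inv_mem (zpow_mem hh _))
  · conv_lhs => rw [← hS]
    rw [Subgroup.closure_le]
    intro g hg
    rw [← inv_mul_cancel_right g (h ^ k g)]
    exact mul_mem (Subgroup.mem_sup_right (Subgroup.subset_closure ⟨g, hg, rfl⟩))
      (Subgroup.mem_sup_left (Subgroup.zpow_mem_zpowers h _))

end FGSubgroups

section MappingTorus

variable {I : Type} (Φ : FreeGroup I →* FreeGroup I)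

lemma mtT_mul_mtι_mul (f : FreeGroup I) : mtT Φ * mtι Φ f * (mtT Φ)⁻¹ = mtι Φ (Φ f) := by
  have hcomp : (MulAut.conj (mtT Φ)).toMonoidHom.comp (mtι Φ) = (mtι Φ).comp Φ := by
    ext i
    have hrel := PresentedGroup.one_of_mem (rels := mtRels Φ) ⟨i, rfl⟩
    simp only [map_mul, map_inv] at hrel
    exact mul_inv_eq_one.1 hrel
  exact DFunLike.congr_fun hcomp f

lemma mtT_pow_mul_mtι_mul (d : ℕ) (f : FreeGroup I) :
    mtT Φ ^ d * mtι Φ f * (mtT Φ ^ d)⁻¹ = mtι Φ (Φ^[d] f) := by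
  induction d with
  | zero => simp
  | succ d ih =>
    rw [Function.iterate_succ_apply', ← mtT_mul_mtι_mul, ← ih, pow_succ', mul_inv_rev]
    simp only [mul_assoc]

lemma mtι_injective (hΦ : Function.Injective Φ) : Function.Injective (mtι Φ) := by
  let e : (⊤ : Subgroup (FreeGroup I)) ≃* Φ.range :=
    Subgroup.topEquiv.trans (MonoidHom.ofInjective hΦ)
  let N := HNNExtension (FreeGroup I) ⊤ Φ.range e
  let v : Option I → N := fun o => o.elim HNNExtension.t fun i => HNNExtension.of (of i)
  have hv : ∀ u, lift v (FreeGroup.map some u) = HNNExtension.of u := fun u => by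
    rw [lift_map]
    exact (FreeGroup.lift_unique _ fun _ => rfl).symm
  let π : MT Φ →* N := PresentedGroup.toGroup (f := v) (by
    rintro _ ⟨i, rfl⟩
    simp only [map_mul, map_inv, hv, FreeGroup.lift_apply_of, mul_inv_eq_one]
    exact (HNNExtension.equiv_eq_conj (φ := e) ⟨of i, trivial⟩).symm)
  refine Function.Injective.of_comp (f := π) ?_
  convert HNNExtension.of_injective e using 1
  exact funext hv

/-- The exponent sum of the stable letter. -/
def mtHeight : MT Φ →* Multiplicative ℤ :=
  PresentedGroup.toGroup (f := fun o => o.elim (Multiplicative.ofAdd 1) fun _ => 1) (by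
    rintro _ ⟨i, rfl⟩
    have hone : lift (1 : I → Multiplicative ℤ) = 1 := by
      ext
      simp
    simp [lift_map, Function.comp_def, ← Pi.one_def, hone])

lemma mtHeight_mtT : mtHeight Φ (mtT Φ) = .ofAdd 1 := PresentedGroup.toGroup.of _

lemma mtHeight_mtι (f : FreeGroup I) : mtHeight Φ (mtι Φ f) = 1 := by
  have hcomp : (mtHeight Φ).comp (mtι Φ) = 1 := by
    ext i
    change mtHeight Φ (PresentedGroup.of (some i)) = 1
    exact PresentedGroup.toGroup.of _
  exact DFunLike.congr_fun hcomp f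

lemma zpowers_mtT_sup_range_mtι : Subgroup.zpowers (mtT Φ) ⊔ (mtι Φ).range = ⊤ := by
  rw [eq_top_iff, ← PresentedGroup.closure_range_of, Subgroup.closure_le]
  rintro _ ⟨_ | i, rfl⟩
  · exact Subgroup.mem_sup_left (Subgroup.mem_zpowers _)
  · exact Subgroup.mem_sup_right ⟨of i, rfl⟩

lemma exists_eq_mtT_pow_inv_mul (g : MT Φ) :
    ∃ (p q : ℕ) (f : FreeGroup I), g = (mtT Φ ^ p)⁻¹ * mtι Φ f * mtT Φ ^ q := by
  have hconj : ∀ y ∈ (mtι Φ).range, mtT Φ * y * (mtT Φ)⁻¹ ∈ (mtι Φ).range := by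
    rintro _ ⟨f, rfl⟩
    exact ⟨Φ f, (mtT_mul_mtι_mul Φ f).symm⟩
  obtain ⟨p, q, _, ⟨f, rfl⟩, hg⟩ := exists_eq_of_mem_zpowers_sup hconj (g := g)
    (zpowers_mtT_sup_range_mtι Φ ▸ Subgroup.mem_top g)
  exact ⟨p, q, f, hg⟩

open Filter

variable {Φ}

lemma eventually_conj_mem_range_mtι {g : MT Φ} (hg : g ∈ (mtHeight Φ).ker) :
    ∀ᶠ N : ℕ in atTop, MulAut.conj (mtT Φ ^ N) g ∈ (mtι Φ).range := by
  obtain ⟨p, q, f, rfl⟩ := exists_eq_mtT_pow_inv_mul Φ g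
  obtain rfl : p = q := by
    have hpq := congrArg Multiplicative.toAdd (MonoidHom.mem_ker.1 hg)
    simp only [map_mul, map_inv, map_pow, mtHeight_mtT, mtHeight_mtι, mul_one, toAdd_mul,
      toAdd_inv, toAdd_pow, toAdd_ofAdd, Int.nsmul_eq_mul, toAdd_one] at hpq
    omega
  filter_upwards [eventually_ge_atTop p] with N hN
  obtain ⟨d, rfl⟩ := Nat.exists_eq_add_of_le' hN
  refine ⟨Φ^[d] f, ?_⟩
  rw [← mtT_pow_mul_mtι_mul, MulAut.conj_apply, pow_add]
  group

lemma exists_map_conj_le_range_mtι {K : Subgroup (MT Φ)} (hK : K.FG) (hker : K ≤ (mtHeight Φ).ker) :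
    ∃ N : ℕ, K.map (MulAut.conj (mtT Φ ^ N)).toMonoidHom ≤ (mtι Φ).range := by
  obtain ⟨S, rfl⟩ := hK
  have hS : ∀ᶠ N : ℕ in atTop, ∀ g ∈ S, MulAut.conj (mtT Φ ^ N) g ∈ (mtι Φ).range :=
    (eventually_all_finset S).2 fun g hg =>
      eventually_conj_mem_range_mtι (hker (Subgroup.subset_closure hg))
  obtain ⟨N, hN⟩ := hS.exists
  refine ⟨N, ?_⟩
  rw [MonoidHom.map_closure, Subgroup.closure_le]
  rintro _ ⟨g, hg, rfl⟩
  exact hN g hg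

lemma exists_isStableLetter_mtι_mul_mtT_pow (hΦ : Function.Injective Φ) (y : FreeGroup I) {d : ℕ}
    (hd : d ≠ 0) : ∃ Ψ, IsStableLetter (mtι Φ) Ψ (mtι Φ y * mtT Φ ^ d) := by
  let Θ : Monoid.End (FreeGroup I) := Φ
  refine ⟨(MulAut.conj y).toMonoidHom.comp (Θ ^ d), mtι_injective Φ hΦ, fun f => ?_, ?_⟩
  · have hpow : (Θ ^ d) f = Φ^[d] f := congrFun (Monoid.End.coe_pow _ Θ d) f
    calc mtι Φ y * mtT Φ ^ d * mtι Φ f * (mtι Φ y * mtT Φ ^ d)⁻¹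
        = mtι Φ y * (mtT Φ ^ d * mtι Φ f * (mtT Φ ^ d)⁻¹) * (mtι Φ y)⁻¹ := by group
      _ = mtι Φ (y * (Θ ^ d) f * y⁻¹) := by
        rw [mtT_pow_mul_mtι_mul, hpow, map_mul, map_mul, map_inv]
  · rintro n ⟨f, hf⟩
    have hheight := congrArg (Multiplicative.toAdd ∘ mtHeight Φ) hf
    simpa [mtHeight_mtT, mtHeight_mtι, hd, eq_comm] using hheight

theorem isFinitelyPresented_zpowers_sup_map (hΦ : Function.Injective Φ) (y : FreeGroup I) (d : ℕ)
    {Z : Subgroup (FreeGroup I)} (hZ : Z.FG) :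
    Group.IsFinitelyPresented ↥(Subgroup.zpowers (mtι Φ y * mtT Φ ^ d) ⊔ Z.map (mtι Φ)) := by
  rcases eq_or_ne d 0 with rfl | hd
  · rw [pow_zero, mul_one, ← MonoidHom.map_zpowers, ← Subgroup.map_sup]
    exact isFinitelyPresented_map_of_fg ((fg_zpowers y).sup hZ) (mtι_injective Φ hΦ)
  · obtain ⟨Ψ, hΨ⟩ := exists_isStableLetter_mtι_mul_mtT_pow hΦ y hd
    exact hΨ.isFinitelyPresented hZ

theorem exists_map_conj_eq_zpowers_sup_map (hΦ : Function.Injective Φ) {H : Subgroup (MT Φ)}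
    (hH : H.FG) :
    ∃ (g : MT Φ) (y : FreeGroup I) (d : ℕ) (Z : Subgroup (FreeGroup I)), Z.FG ∧
      H.map (MulAut.conj g).toMonoidHom =
        Subgroup.zpowers (mtι Φ y * mtT Φ ^ d) ⊔ Z.map (mtι Φ) := by
  obtain ⟨h, hpos, L, hLker, hL, rfl⟩ := exists_zpowers_sup_eq_of_fg (mtHeight Φ) hH
  obtain ⟨d, hd⟩ := Int.eq_ofNat_of_zero_le hpos
  have hker : h * (mtT Φ ^ d)⁻¹ ∈ (mtHeight Φ).ker := by
    apply Multiplicative.toAdd.injective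
    simp [mtHeight_mtT, hd]
  obtain ⟨N, hN⟩ := exists_map_conj_le_range_mtι ((fg_zpowers _).sup hL)
    (sup_le (Subgroup.zpowers_le.2 hker) hLker)
  rw [Subgroup.map_sup, sup_le_iff] at hN
  obtain ⟨y, hy⟩ := hN.1 (Subgroup.mem_map_of_mem _ (Subgroup.mem_zpowers _))
  obtain ⟨Z, hZ, hmap⟩ := exists_fg_map_eq (mtι_injective Φ hΦ) (fg_map hL _) hN.2
  refine ⟨mtT Φ ^ N, y, d, Z, hZ, ?_⟩
  have hconj : (MulAut.conj (mtT Φ ^ N)).toMonoidHom h = mtι Φ y * mtT Φ ^ d := by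
    rw [hy]
    simp only [MulEquiv.toMonoidHom_eq_coe, MonoidHom.coe_coe, MulAut.conj_apply]
    group
  rw [Subgroup.map_sup, MonoidHom.map_zpowers, hconj, hmap]

end MappingTorus

end FeighnHandel

/-- **Main Theorem.** The mapping torus `M(Φ)` of an injective endomorphism `Φ` of a
(possibly infinite rank) free group is coherent: every finitely generated subgroup of
`M(Φ)` is finitely presented. -/
theorem mappingTorus_coherent {I : Type} (Φ : FreeGroup I →* FreeGroup I)
    (hΦ : Function.Injective Φ) (H : Subgroup (MT Φ)) (hH : H.FG) :
    FinitelyPresented H := by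
  obtain ⟨g, y, d, Z, hZ, hconj⟩ := FeighnHandel.exists_map_conj_eq_zpowers_sup_map hΦ hH
  have hfp := FeighnHandel.isFinitelyPresented_zpowers_sup_map hΦ y d hZ
  rw [← hconj] at hfp
  obtain ⟨n, rels, hrels, ⟨e⟩⟩ :=
    (FeighnHandel.isFinitelyPresented_of_map_conj (K := H) g).exists_mulEquiv_presentedGroup
  exact ⟨n, rels, hrels, ⟨e.symm⟩⟩
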